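/- The function R ↦ λ₁(Γ_R), assigning to R the first Rayleigh quotient of the Laplacian on Γ_R with Dirichlet conditions on ∂Γ_R∖Σ_R and Neumann conditions on Σ_R, is real-analytic on the interval (0,∞). -/

import Mathlib

/-!
Fix `R > 0`. The map `(x, y) ↦ (x + s χ x, y + s χ y)`, with `χ` a cut-off equal to `0` on
`(-∞, 0]` and to `1` on `[R, ∞)`, carries `Γ_R` onto `Γ_{R+s}` and respects the Dirichlet part of
the boundary. Pulling the two quadratic forms back to `Γ_R` gives bounded symmetric operators
`A_s` (`famA`) and `B_s` (`famB`), analytic in `s`, on the fixed form domain `VR R`, the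
`H¹`-closure of the admissible functions; `λ₁(Γ_{R+s})` is the bottom of the pencil `A_s - λ B_s`
(`inner_famA`, `inner_famB`, `lamR_eq_of_bottom`). So the claim is that an analytic pencil has an
analytic bottom near `s = 0`, which follows from the implicit function theorem once the bottom at
`s = 0` is a simple eigenvalue with a spectral gap (`exists_analytic_bottom`).

At `s = 0` one has `B_0 = J†J` and `A_0 = 1 - B_0`, where `J` is the inclusion of the form domain
in `L²(Γ_R)`. The operator `J` is compact by Rellich's theorem (`JR_compact`), proved from the
Poincaré inequality on small rectangles. Hence the gap follows from simplicity of the top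
eigenvalue of `B_0` (`exists_gap`, `B0_simple`).

Simplicity rests on positivity. The modulus of a top eigenvector is again a top eigenvector
(`exists_abs_eigenvector`), and a nonnegative top eigenvector vanishes almost everywhere or almost
nowhere (`eigenvector_dichotomy`). For the latter, testing the eigenvalue equation with
`bump² / (a + ε)`, where `a ≥ 0` is an admissible function close to the eigenvector, bounds the
gradient of `log (a + ε)` uniformly in `ε`; by the Poincaré inequality the variance of
`log (1 + w / ε)` on rectangles is bounded uniformly in `ε`, which is impossible if `w` vanishes on
a part, but not almost all, of a rectangle. Connectedness of `Γ_R` globalizes this. Thus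
eigenvectors have a strict sign, and two of them combine to one of mean zero, which must vanish.
-/

noncomputable section
open MeasureTheory Set Real

/-- The interval `I = (-1,0)`. -/
def II : Set ℝ := Set.Ioo (-1) 0

/-- The broken guide `Γ = {x ∈ ℝ² : -1 < min(x₁,x₂) < 0}`. -/
def Gam : Set (ℝ × ℝ) := {p | -1 < min p.1 p.2 ∧ min p.1 p.2 < 0}

/-- The box `□_L = {x : max(|x₁+1|,|x₂+1|) < L}`. -/
def Box (L : ℝ) : Set (ℝ × ℝ) := {p | |p.1 + 1| < L ∧ |p.2 + 1| < L}

/-- The finite guide `Γ_R = Γ ∩ □_{R+1}`. -/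
def GamR (R : ℝ) : Set (ℝ × ℝ) := Gam ∩ Box (R + 1)

/-- The Neumann part `Σ_R = ∂Γ_R ∩ ∂□_{R+1}` of the boundary. -/
def Sig (R : ℝ) : Set (ℝ × ℝ) := frontier (GamR R) ∩ frontier (Box (R + 1))

/-- The Dirichlet part `∂Γ_R ∖ Σ_R` of the boundary. -/
def DirB (R : ℝ) : Set (ℝ × ℝ) := frontier (GamR R) \ Sig R

/-- Squared gradient `|∇u|² = (∂₁u)² + (∂₂u)²`. -/
def gradSq2 (u : ℝ × ℝ → ℝ) (p : ℝ × ℝ) : ℝ :=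
  (fderiv ℝ u p (1, 0)) ^ 2 + (fderiv ℝ u p (0, 1)) ^ 2

/-- Admissible functions for the mixed problem on `Γ_R`: `C¹` up to the boundary
(modelled by a globally `C¹` extension) vanishing on the Dirichlet part. -/
def AdmR (R : ℝ) (u : ℝ × ℝ → ℝ) : Prop :=
  ContDiff ℝ 1 u ∧ ∀ p ∈ DirB R, u p = 0

/-- First Rayleigh quotient `λ₁(Γ_R)` of the mixed Dirichlet–Neumann Laplacian on `Γ_R`. -/
def lamR (R : ℝ) : ℝ :=
  sInf {r | ∃ u : ℝ × ℝ → ℝ, AdmR R u ∧ (∫ p in GamR R, (u p) ^ 2) ≠ 0 ∧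
    r = (∫ p in GamR R, gradSq2 u p) / ∫ p in GamR R, (u p) ^ 2}

/-- First Rayleigh quotient `λ₁(Γ)` of the Dirichlet Laplacian on the broken guide `Γ`. -/
def lamG : ℝ :=
  sInf {r | ∃ u : ℝ × ℝ → ℝ, ContDiff ℝ 1 u ∧ HasCompactSupport u ∧ tsupport u ⊆ Gam ∧
    (∫ p in Gam, (u p) ^ 2) ≠ 0 ∧
    r = (∫ p in Gam, gradSq2 u p) / ∫ p in Gam, (u p) ^ 2}

/-- `ω = √(π² − λ₁(Γ))`. -/
def omega : ℝ := Real.sqrt (π ^ 2 - lamG)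

open Filter Topology RealInnerProductSpace ContDiff

/-! ### Analytic perturbation of a simple bottom eigenvalue -/

section Perturbation

variable {V : Type*} [NormedAddCommGroup V] [InnerProductSpace ℝ V] [CompleteSpace V]

/-- Lax–Milgram in operator form. -/
theorem isUnit_of_coercive (T : V →L[ℝ] V) {δ : ℝ} (hδ : 0 < δ)
    (hT : ∀ v, δ * ‖v‖ ^ 2 ≤ ⟪T v, v⟫) : IsUnit T := by
  have hc : IsCoercive ((innerSL ℝ).comp T : V →L[ℝ] V →L[ℝ] ℝ) :=
    ⟨δ, hδ, fun v => by simpa [pow_two, mul_assoc] using hT v⟩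
  have : T = (hc.continuousLinearEquivOfBilin : V →L[ℝ] V) := by
    ext v
    exact hc.unique_continuousLinearEquivOfBilin (fun w => by simp)
  rw [this, ContinuousLinearMap.isUnit_iff_bijective]
  exact hc.continuousLinearEquivOfBilin.bijective

/-- The bottom of an analytic pencil `A s - λ B s` is analytic near a simple bottom eigenvalue `lam₀`
with a spectral gap; simplicity and gap are encoded by coercivity of `A s₀ - lam₀ B s₀ + P`, with `P`
the projection on the eigenvector `u₀`.

Put `T (s, λ) = A s - λ B s + P`, which is invertible near `(s₀, lam₀)`, and
`F (s, λ) = ⟪u₀, T (s, λ)⁻¹ u₀⟫`. At the base point `F = 1` and `∂F/∂λ = ⟪B s₀ u₀, u₀⟫ > 0`, so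
`F (s, m s) = 1` defines an analytic `m`. Where `F = 1`, the vector `U = T⁻¹ u₀` satisfies
`⟪u₀, U⟫ = 1`, hence `P U = u₀ = T U` and `A s U = m s • B s U`. -/
theorem exists_analytic_bottom (A B : ℝ → V →L[ℝ] V) {s₀ lam₀ δ : ℝ} {u₀ : V}
    (hA : AnalyticAt ℝ A s₀) (hB : AnalyticAt ℝ B s₀)
    (hAs : ∀ s v w, ⟪A s v, w⟫ = ⟪v, A s w⟫) (hBs : ∀ s v w, ⟪B s v, w⟫ = ⟪v, B s w⟫)
    (hu : A s₀ u₀ = lam₀ • B s₀ u₀) (hu1 : ‖u₀‖ = 1) (hBu : 0 < ⟪B s₀ u₀, u₀⟫)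
    (hδ : 0 < δ)
    (hc : ∀ v, δ * ‖v‖ ^ 2 ≤ ⟪A s₀ v, v⟫ - lam₀ * ⟪B s₀ v, v⟫ + ⟪u₀, v⟫ ^ 2) :
    ∃ m : ℝ → ℝ, AnalyticAt ℝ m s₀ ∧ ∀ᶠ s in 𝓝 s₀,
      (∀ v, m s * ⟪B s v, v⟫ ≤ ⟪A s v, v⟫) ∧
      ∃ u, ⟪A s u, u⟫ = m s * ⟪B s u, u⟫ ∧ 0 < ⟪B s u, u⟫ := by
  set P : V →L[ℝ] V := (innerSL ℝ u₀).smulRight u₀ with hP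
  have hPv : ∀ v, P v = ⟪u₀, v⟫ • u₀ := fun v => by simp [hP]
  set T : ℝ × ℝ → V →L[ℝ] V := fun q => A q.1 - q.2 • B q.1 + P with hT
  have hTv : ∀ q v, T q v = A q.1 v - q.2 • B q.1 v + ⟪u₀, v⟫ • u₀ := fun q v => by
    simp [hT, hPv]
  have hTform : ∀ q v, ⟪T q v, v⟫ = ⟪A q.1 v, v⟫ - q.2 * ⟪B q.1 v, v⟫ + ⟪u₀, v⟫ ^ 2 := by
    intro q v
    rw [hTv, inner_add_left, inner_sub_left, inner_smul_left, inner_smul_left]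
    simp [pow_two]
  have hTs : ∀ q v w, ⟪T q v, w⟫ = ⟪v, T q w⟫ := by
    intro q v w
    rw [hTv, hTv, inner_add_left, inner_sub_left, inner_smul_left, inner_smul_left,
      inner_add_right, inner_sub_right, inner_smul_right, inner_smul_right, hAs, hBs]
    simp [real_inner_comm u₀ v]; ring
  set q₀ : ℝ × ℝ := (s₀, lam₀) with hq₀
  have hTcd : ContDiffAt ℝ ω T q₀ := by
    have h1 : ContDiffAt ℝ ω (fun q : ℝ × ℝ => A q.1) q₀ :=
      ContDiffAt.comp (g := A) q₀ hA.contDiffAt contDiffAt_fst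
    have h2 : ContDiffAt ℝ ω (fun q : ℝ × ℝ => B q.1) q₀ :=
      ContDiffAt.comp (g := B) q₀ hB.contDiffAt contDiffAt_fst
    exact (h1.sub (contDiffAt_snd.smul h2)).add contDiffAt_const
  have hunit : IsUnit (T q₀) := isUnit_of_coercive _ hδ (fun v => by rw [hTform]; exact hc v)
  have hinv : ContDiffAt ℝ ω (fun q => Ring.inverse (T q)) q₀ := by
    obtain ⟨z, hz⟩ := hunit
    have := (analyticAt_inverse (𝕜 := ℝ) z).contDiffAt (n := ω)
    rw [hz] at this
    exact ContDiffAt.comp (g := Ring.inverse) q₀ this hTcd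
  set U : ℝ × ℝ → V := fun q => Ring.inverse (T q) u₀ with hU
  have hUcd : ContDiffAt ℝ ω U q₀ := hinv.clm_apply contDiffAt_const
  have hTU : ∀ᶠ q in 𝓝 q₀, T q (U q) = u₀ := by
    have : ∀ᶠ q in 𝓝 q₀, IsUnit (T q) :=
      hTcd.continuousAt.eventually (Units.isOpen.mem_nhds hunit)
    filter_upwards [this] with q hq
    have := Ring.mul_inverse_cancel (T q) hq
    exact congrArg (fun S : V →L[ℝ] V => S u₀) this
  have hTu₀ : T q₀ u₀ = u₀ := by
    rw [hTv]; simp [hq₀, hu, hu1]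
  have hUq₀ : U q₀ = u₀ := by
    have := Ring.inverse_mul_cancel (T q₀) hunit
    have := congrArg (fun S : V →L[ℝ] V => S u₀) this
    simpa [hTu₀] using this
  set F : ℝ × ℝ → ℝ := fun q => ⟪u₀, U q⟫ with hF
  have hFcd : ContDiffAt ℝ ω F q₀ := contDiffAt_const.inner ℝ hUcd
  -- `F` is strictly increasing in its second variable at the base point
  have hFder : HasDerivAt (fun t => F (s₀, t)) ⟪B s₀ u₀, u₀⟫ lam₀ := by
    have hUd : HasDerivAt (fun t => U (s₀, t)) (fderiv ℝ U q₀ (0, 1)) lam₀ := by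
      have h1 : HasDerivAt (fun t : ℝ => (s₀, t)) ((0 : ℝ), (1 : ℝ)) lam₀ :=
        (hasDerivAt_const _ _).prodMk (hasDerivAt_id _)
      exact (hUcd.differentiableAt (by simp)).hasFDerivAt.comp_hasDerivAt lam₀ h1
    set U' := fderiv ℝ U q₀ (0, 1) with hU'
    have hTt : ∀ t, T (s₀, t) = T q₀ - (t - lam₀) • B s₀ := by
      intro t; simp only [hT, hq₀]; module
    have hTUd : HasDerivAt (fun t => T (s₀, t) (U (s₀, t)))
        ((-(B s₀)) u₀ + T q₀ U') lam₀ := by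
      have h2 : HasDerivAt (fun t => T (s₀, t)) (-(B s₀)) lam₀ := by
        simp_rw [hTt]
        have := (((hasDerivAt_id lam₀).sub_const lam₀).smul_const (B s₀)).const_sub (T q₀)
        simpa using this
      have := h2.clm_apply hUd
      have e : U (s₀, lam₀) = u₀ := hUq₀
      rw [e] at this
      exact this
    have hz : HasDerivAt (fun t => T (s₀, t) (U (s₀, t))) 0 lam₀ := by
      have : Tendsto (fun t : ℝ => (s₀, t)) (𝓝 lam₀) (𝓝 q₀) :=
        (Continuous.prodMk_right s₀).tendsto lam₀
      exact (hasDerivAt_const lam₀ u₀).congr_of_eventuallyEq (this.eventually hTU)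
    have key : T q₀ U' = B s₀ u₀ := by
      have := hTUd.unique hz
      simp at this
      rwa [neg_add_eq_zero, eq_comm] at this
    have h3 : HasDerivAt (fun t => F (s₀, t)) (⟪u₀, U'⟫) lam₀ := by
      have := (hasDerivAt_const lam₀ u₀).inner ℝ hUd
      simpa using this
    have h4 : ⟪u₀, U'⟫ = ⟪B s₀ u₀, u₀⟫ := by
      conv_lhs => rw [← hTu₀, hTs, key, real_inner_comm]
    rwa [h4] at h3
  have hFder' : fderiv ℝ F q₀ (0, 1) = ⟪B s₀ u₀, u₀⟫ := by
    have h1 : HasDerivAt (fun t : ℝ => (s₀, t)) ((0 : ℝ), (1 : ℝ)) lam₀ :=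
      (hasDerivAt_const _ _).prodMk (hasDerivAt_id _)
    have := (hFcd.differentiableAt (by simp)).hasFDerivAt.comp_hasDerivAt lam₀ h1
    exact this.unique hFder
  have hinvt : (fderiv ℝ F q₀ ∘L .inr ℝ ℝ ℝ).IsInvertible := by
    refine ⟨ContinuousLinearEquiv.unitsEquivAut ℝ (Units.mk0 _ hBu.ne'), ?_⟩
    ext
    simp [hFder']
  set m := hFcd.implicitFunction (by simp) hinvt with hm
  have hm0 : m s₀ = lam₀ := hFcd.implicitFunction_apply_self (by simp) hinvt
  have hmcd : ContDiffAt ℝ ω m s₀ := hFcd.contDiffAt_implicitFunction (by simp) hinvt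
  have hFm : ∀ᶠ s in 𝓝 s₀, F (s, m s) = 1 := by
    have := hFcd.eventually_apply_implicitFunction (by simp) hinvt
    have e : F q₀ = 1 := by simp [hF, hUq₀, hu1]
    rwa [e] at this
  refine ⟨m, hmcd.analyticAt, ?_⟩
  have hlim : Tendsto (fun s => (s, m s)) (𝓝 s₀) (𝓝 q₀) := by
    have := hmcd.continuousAt.tendsto
    rw [hm0] at this
    exact (tendsto_id).prodMk_nhds this
  -- coercivity with constant `δ` survives as nonnegativity under perturbations of norm below `δ`
  have hpos : ∀ᶠ q in 𝓝 q₀, ∀ v, 0 ≤ ⟪T q v, v⟫ := by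
    have : ∀ᶠ q in 𝓝 q₀, dist (T q) (T q₀) < δ :=
      hTcd.continuousAt.eventually (Metric.ball_mem_nhds _ hδ)
    filter_upwards [this] with q hq v
    rw [dist_eq_norm] at hq
    have h1 : |⟪(T q - T q₀) v, v⟫| ≤ δ * ‖v‖ ^ 2 := by
      calc _ ≤ ‖(T q - T q₀) v‖ * ‖v‖ := abs_real_inner_le_norm _ _
        _ ≤ (‖T q - T q₀‖ * ‖v‖) * ‖v‖ := by gcongr; exact ContinuousLinearMap.le_opNorm _ _
        _ ≤ (δ * ‖v‖) * ‖v‖ := by gcongr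
        _ = _ := by ring
    have h2 : δ * ‖v‖ ^ 2 ≤ ⟪T q₀ v, v⟫ := by rw [hTform]; exact hc v
    have h3 : ⟪(T q - T q₀) v, v⟫ = ⟪T q v, v⟫ - ⟪T q₀ v, v⟫ := by
      simp [inner_sub_left]
    have := (abs_le.1 h1).1
    linarith
  have hBpos : ∀ᶠ s in 𝓝 s₀, 0 < ⟪B s (U (s, m s)), U (s, m s)⟫ := by
    have hUc : Tendsto (fun s => U (s, m s)) (𝓝 s₀) (𝓝 u₀) := by
      have := hUcd.continuousAt.tendsto.comp hlim
      rwa [hUq₀] at this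
    have hBc : Tendsto B (𝓝 s₀) (𝓝 (B s₀)) := hB.continuousAt
    have hBU : Tendsto (fun s => B s (U (s, m s))) (𝓝 s₀) (𝓝 (B s₀ u₀)) :=
      (isBoundedBilinearMap_apply.continuous.tendsto (B s₀, u₀)).comp (hBc.prodMk_nhds hUc)
    have := hBU.inner (𝕜 := ℝ) hUc
    exact this.eventually (lt_mem_nhds hBu)
  filter_upwards [hFm, hlim.eventually hTU, hlim.eventually hpos, hBpos] with s h1 h2 h3 h4
  set q : ℝ × ℝ := (s, m s)
  set u := U q
  have h1' : ⟪u₀, u⟫ = 1 := h1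
  refine ⟨fun v => ?_, u, ?_, h4⟩
  -- the nonnegative form of `T` is evaluated at the minimum over `t` of the line `v - t • u`
  · have key := h3 (v - ⟪u₀, v⟫ • u)
    have e : ⟪T q v, u⟫ = ⟪u₀, v⟫ := by rw [hTs, h2, real_inner_comm]
    have e2 := hTform q v
    rw [map_sub, map_smul, h2, inner_sub_left, inner_sub_right, inner_sub_right, inner_smul_left,
      inner_smul_right, inner_smul_right, inner_smul_left, h1', e, e2] at key
    simp only [q, conj_trivial] at key
    nlinarith [key]
  · have := hTform q u
    rw [h2, h1'] at this
    simp only [q] at this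
    linarith

end Perturbation

/-! ### Spectral gap and a compactness criterion -/

section Gap

variable {V : Type*} [NormedAddCommGroup V] [InnerProductSpace ℝ V] [CompleteSpace V]

/-- For a compact nonnegative symmetric operator the norm is an eigenvalue: it lies in the spectrum
because it is the supremum of the Rayleigh quotients. -/
theorem exists_top_eigenvector {T : V →L[ℝ] V} (hT : IsCompactOperator T)
    (hs : ∀ v w, ⟪T v, w⟫ = ⟪v, T w⟫) (hpos : ∀ v, 0 ≤ ⟪T v, v⟫) (h0 : T ≠ 0) :
    ∃ x, x ≠ 0 ∧ T x = ‖T‖ • x := by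
  have hsymm : T.IsSymmetric := fun v w => hs v w
  have hn : ‖T‖ ≠ 0 := norm_ne_zero_iff.2 h0
  have : Nontrivial V := by
    by_contra hV
    rw [not_nontrivial_iff_subsingleton] at hV
    exact h0 (Subsingleton.elim _ _)
  have hmem : ‖T‖ ∈ spectrum ℝ T := by
    by_contra hcon
    have hres : algebraMap ℝ ℝ ‖T‖ ∈ resolventSet ℝ T := by
      simpa [spectrum] using hcon
    obtain ⟨ε, hε, h⟩ := T.rayleighQuotient_le_of_norm_mem_resolventSet hres
    have h1 : ‖T‖ ≤ ‖T‖ - ε := by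
      conv_lhs => rw [T.norm_eq_iSup_rayleighQuotient hsymm]
      refine ciSup_le fun x => ?_
      rw [abs_of_nonneg]
      · exact h x
      · have := hpos x
        simp only [ContinuousLinearMap.rayleighQuotient, ContinuousLinearMap.reApplyInnerSelf_apply]
        exact div_nonneg this (sq_nonneg _)
    linarith
  have hev := (hT.hasEigenvalue_iff_mem_spectrum hn).2 hmem
  obtain ⟨x, hx⟩ := hev.exists_hasEigenvector
  exact ⟨x, hx.2, hx.apply_eq_smul⟩

/-- A simple top eigenvalue of a compact nonnegative symmetric operator `T` is separated from the rest
of the spectrum: the deflated operator `T - ‖T‖ P`, with `P` the projection on the top eigenvector,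
has norm smaller than `‖T‖`. -/
theorem exists_gap {T : V →L[ℝ] V} (hT : IsCompactOperator T)
    (hs : ∀ v w, ⟪T v, w⟫ = ⟪v, T w⟫) (hpos : ∀ v, 0 ≤ ⟪T v, v⟫) (h0 : T ≠ 0)
    (hsimple : ∀ u w, T u = ‖T‖ • u → T w = ‖T‖ • w → u ≠ 0 → ∃ c : ℝ, w = c • u) :
    ∃ u₀, ‖u₀‖ = 1 ∧ T u₀ = ‖T‖ • u₀ ∧ ∃ δ > 0, ∀ v,
      δ * ‖v‖ ^ 2 ≤ ‖v‖ ^ 2 - ‖T‖⁻¹ * ⟪T v, v⟫ + ⟪u₀, v⟫ ^ 2 := by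
  obtain ⟨x, hx0, hx⟩ := exists_top_eigenvector hT hs hpos h0
  have hβ : 0 < ‖T‖ := norm_pos_iff.2 h0
  have hxn : ‖x‖ ≠ 0 := norm_ne_zero_iff.2 hx0
  set u₀ := ‖x‖⁻¹ • x with hu₀
  have hu1 : ‖u₀‖ = 1 := by simp [hu₀, norm_smul, hxn]
  have hTu : T u₀ = ‖T‖ • u₀ := by rw [hu₀, map_smul, hx, smul_comm]
  have hu0 : u₀ ≠ 0 := by
    intro h; rw [h, norm_zero] at hu1; exact zero_ne_one hu1
  refine ⟨u₀, hu1, hTu, ?_⟩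
  -- deflation: remove the top eigenvector
  set P : V →L[ℝ] V := (innerSL ℝ u₀).smulRight u₀ with hP
  have hPv : ∀ v, P v = ⟪u₀, v⟫ • u₀ := fun v => by simp [hP]
  set T' := T - ‖T‖ • P with hT'
  have hT'v : ∀ v, T' v = T v - (‖T‖ * ⟪u₀, v⟫) • u₀ := fun v => by
    simp [hT', hPv, mul_smul]
  have hform : ∀ v, ⟪T' v, v⟫ = ⟪T v, v⟫ - ‖T‖ * ⟪u₀, v⟫ ^ 2 := fun v => by
    rw [hT'v, inner_sub_left, inner_smul_left]; simp; ring
  have hPc : IsCompactOperator P := by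
    have h1 : IsCompactOperator (innerSL ℝ u₀ : V →L[ℝ] ℝ) := by
      have : IsCompactOperator (id : ℝ → ℝ) :=
        (isCompactOperator_id_iff_finiteDimensional (𝕜 := ℝ)).2 inferInstance
      exact this.comp_clm (innerSL ℝ u₀ : V →L[ℝ] ℝ)
    exact h1.clm_comp (ContinuousLinearMap.toSpanSingleton ℝ u₀)
  have hT'c : IsCompactOperator T' := hT.sub (hPc.smul ‖T‖)
  have hT's : ∀ v w, ⟪T' v, w⟫ = ⟪v, T' w⟫ := fun v w => by
    rw [hT'v, hT'v, inner_sub_left, inner_sub_right, inner_smul_left, inner_smul_right, hs]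
    simp [real_inner_comm u₀ v]; ring
  have hT'u : T' u₀ = 0 := by
    rw [hT'v, hTu]; simp [hu1]
  have hle : ∀ v, ⟪T v, v⟫ ≤ ‖T‖ * ‖v‖ ^ 2 := fun v => by
    calc _ ≤ ‖T v‖ * ‖v‖ := real_inner_le_norm _ _
      _ ≤ ‖T‖ * ‖v‖ * ‖v‖ := by gcongr; exact T.le_opNorm v
      _ = _ := by ring
  have hT'pos : ∀ v, 0 ≤ ⟪T' v, v⟫ := fun v => by
    have e : T' (v - ⟪u₀, v⟫ • u₀) = T' v := by rw [map_sub, map_smul, hT'u]; simp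
    have h := hpos (v - ⟪u₀, v⟫ • u₀)
    have h2 := hform (v - ⟪u₀, v⟫ • u₀)
    have h3 : ⟪u₀, v - ⟪u₀, v⟫ • u₀⟫ = 0 := by
      rw [inner_sub_right, inner_smul_right]; simp [hu1]
    have h4 : ⟪T' v, u₀⟫ = 0 := by rw [hT's, hT'u, inner_zero_right]
    rw [e, inner_sub_right, inner_smul_right, h4, h3] at h2
    simp at h2
    rw [h2]; simpa using h
  have hlt : ‖T'‖ < ‖T‖ := by
    by_contra! hcon
    have hT'0 : T' ≠ 0 := by
      intro h; rw [h, norm_zero] at hcon; linarith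
    obtain ⟨y, hy0, hy⟩ := exists_top_eigenvector hT'c hT's hT'pos hT'0
    have hperp : ⟪u₀, y⟫ = 0 := by
      have : ⟪T' y, u₀⟫ = 0 := by rw [hT's, hT'u, inner_zero_right]
      rw [hy, inner_smul_left] at this
      rcases mul_eq_zero.1 this with h | h
      · simp at h; exact absurd h hT'0
      · rwa [real_inner_comm]
    have hTy : T y = ‖T'‖ • y := by
      rw [← hy, hT'v, hperp]; simp
    have hyn : 0 < ‖y‖ ^ 2 := by positivity
    have h1 := hle y
    rw [hTy, inner_smul_left, real_inner_self_eq_norm_sq] at h1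
    have heq : ‖T'‖ = ‖T‖ := le_antisymm (le_of_mul_le_mul_right h1 hyn) hcon
    rw [heq] at hTy
    obtain ⟨c, hc⟩ := hsimple u₀ y hTu hTy hu0
    rw [hc, inner_smul_right, real_inner_self_eq_norm_sq, hu1] at hperp
    simp at hperp
    exact hy0 (by rw [hc, hperp, zero_smul])
  refine ⟨1 - ‖T‖⁻¹ * ‖T'‖, ?_, fun v => ?_⟩
  · have : ‖T‖⁻¹ * ‖T'‖ < 1 := by rw [inv_mul_lt_iff₀ hβ]; simpa using hlt
    linarith
  · have h1 : ⟪T' v, v⟫ ≤ ‖T'‖ * ‖v‖ ^ 2 := by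
      calc _ ≤ ‖T' v‖ * ‖v‖ := real_inner_le_norm _ _
        _ ≤ ‖T'‖ * ‖v‖ * ‖v‖ := by gcongr; exact T'.le_opNorm v
        _ = _ := by ring
    rw [hform] at h1
    have h2 := mul_le_mul_of_nonneg_left h1 (inv_nonneg.2 hβ.le)
    have h3 : ‖T‖⁻¹ * (⟪T v, v⟫ - ‖T‖ * ⟪u₀, v⟫ ^ 2) = ‖T‖⁻¹ * ⟪T v, v⟫ - ⟪u₀, v⟫ ^ 2 := by
      field_simp
    rw [h3] at h2
    linarith

/-- An operator which is arbitrarily small on subspaces of finite codimension is a norm limit of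
operators of finite rank. -/
theorem isCompactOperator_of_finite_codim {H : Type*} [NormedAddCommGroup H]
    [InnerProductSpace ℝ H] [CompleteSpace H] (J : V →L[ℝ] H)
    (h : ∀ ε > 0, ∃ S : Set V, S.Finite ∧ ∀ v, (∀ g ∈ S, ⟪g, v⟫ = 0) → ‖J v‖ ≤ ε * ‖v‖) :
    IsCompactOperator J := by
  choose! S hS hJ using h
  have hcl : J ∈ closure {f : V →L[ℝ] H | IsCompactOperator f} := by
    rw [Metric.mem_closure_iff]
    intro ε hε
    set N := Submodule.span ℝ (S (ε / 2)) with hN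
    have : FiniteDimensional ℝ N := FiniteDimensional.span_of_finite ℝ (hS _ (half_pos hε))
    refine ⟨J ∘L N.starProjection, ?_, ?_⟩
    · have h1 : IsCompactOperator (id : N → N) :=
        (isCompactOperator_id_iff_finiteDimensional (𝕜 := ℝ)).2 inferInstance
      have h2 := (h1.comp_clm N.orthogonalProjectionOnto).clm_comp (J ∘L N.subtypeL)
      exact h2
    · rw [dist_eq_norm]
      refine lt_of_le_of_lt (ContinuousLinearMap.opNorm_le_bound _ (half_pos hε).le fun v => ?_)
        (half_lt_self hε)
      have hperp := N.sub_starProjection_mem_orthogonal v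
      have h3 := hJ _ (half_pos hε) (v - N.starProjection v) fun g hg =>
        hperp g (Submodule.subset_span hg)
      have h4 : ‖v - N.starProjection v‖ ≤ ‖v‖ := by
        have e : v - N.starProjection v = Nᗮ.starProjection v := by
          simp [Submodule.starProjection_orthogonal]
        rw [e]
        exact Nᗮ.norm_starProjection_apply_le v
      calc _ = ‖J (v - N.starProjection v)‖ := by simp
        _ ≤ _ := h3
        _ ≤ _ := by gcongr
  exact isClosed_setOfPred_isCompactOperator.closure_subset hcl

end Gap

/-! ### Poincaré inequality on rectangles -/

/-- Cauchy–Schwarz against the constant function `1`. -/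
theorem sq_integral_le {α : Type*} [MeasurableSpace α] (μ : Measure α) [IsFiniteMeasure μ]
    {f : α → ℝ} (hf : Integrable f μ) (hf2 : Integrable (fun x => f x ^ 2) μ) :
    (∫ x, f x ∂μ) ^ 2 ≤ μ.real univ * ∫ x, f x ^ 2 ∂μ := by
  set m := μ.real univ with hm
  set I := ∫ x, f x ∂μ with hI
  have hm0 : 0 ≤ m := measureReal_nonneg
  rcases hm0.eq_or_lt with h | h
  · have hμ : μ = 0 := by
      rw [← Measure.measure_univ_eq_zero]
      exact (measureReal_eq_zero_iff).1 h.symm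
    simp [hI, hμ]
  · have h1 : 0 ≤ ∫ x, (m * f x - I) ^ 2 ∂μ := integral_nonneg fun x => sq_nonneg _
    have h2 : ∫ x, (m * f x - I) ^ 2 ∂μ = m ^ 2 * ∫ x, f x ^ 2 ∂μ - 2 * m * I * I + I ^ 2 * m := by
      have e : ∀ x, (m * f x - I) ^ 2 = m ^ 2 * f x ^ 2 - 2 * m * I * f x + I ^ 2 := fun x => by ring
      simp_rw [e]
      rw [integral_add (f := fun x => m ^ 2 * f x ^ 2 - 2 * m * I * f x)
          ((hf2.const_mul _).sub (hf.const_mul _)) (integrable_const _),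
        integral_sub (hf2.const_mul _) (hf.const_mul _), integral_const_mul, integral_const_mul,
        integral_const]
      simp [hm]; ring
    rw [h2] at h1
    have : 0 ≤ m * (m * ∫ x, f x ^ 2 ∂μ - I ^ 2) := by nlinarith
    have := nonneg_of_mul_nonneg_right this h
    linarith

/-- One-dimensional oscillation bound. -/
theorem sq_sub_le_integral_deriv {φ φ' : ℝ → ℝ} (hφ : ∀ x, HasDerivAt φ (φ' x) x)
    (hc : Continuous φ') {a b x y : ℝ} (hx : x ∈ Ioc a b) (hy : y ∈ Ioc a b) :
    (φ x - φ y) ^ 2 ≤ (b - a) * ∫ t in Ioc a b, φ' t ^ 2 := by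
  wlog hxy : y ≤ x generalizing x y
  · have := this hy hx (le_of_not_ge hxy)
    rwa [sub_sq_comm] at this
  have h1 : φ x - φ y = ∫ t in Ioc y x, φ' t := by
    rw [← intervalIntegral.integral_of_le hxy]
    exact (intervalIntegral.integral_eq_sub_of_hasDerivAt (fun t _ => hφ t)
      (hc.intervalIntegrable _ _)).symm
  have hI : ∀ (f : ℝ → ℝ) (_ : Continuous f) (p q : ℝ), IntegrableOn f (Ioc p q) := fun f hf p q =>
    (hf.continuousOn.integrableOn_Icc (a := p) (b := q)).mono_set Ioc_subset_Icc_self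
  have h2 := sq_integral_le (volume.restrict (Ioc y x)) (hI _ hc _ _) (hI _ (hc.pow 2) _ _)
  rw [h1]
  refine h2.trans ?_
  have h3 : (volume.restrict (Ioc y x)).real univ = x - y := by
    simp [hxy]
  rw [h3]
  have h4 : ∫ t in Ioc y x, φ' t ^ 2 ≤ ∫ t in Ioc a b, φ' t ^ 2 :=
    setIntegral_mono_set (hI _ (hc.pow 2) _ _) (ae_of_all _ fun _ => sq_nonneg _)
      (Ioc_subset_Ioc hy.1.le hx.2).eventuallyLE
  have h5 : 0 ≤ ∫ t in Ioc y x, φ' t ^ 2 := integral_nonneg fun _ => sq_nonneg _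
  have : x - y ≤ b - a := by linarith [hx.2, hy.1]
  exact mul_le_mul this h4 h5 (by linarith)

/-- The half-open rectangle `(a,b] × (c,d]`. -/
def Rect (a b c d : ℝ) : Set (ℝ × ℝ) := Ioc a b ×ˢ Ioc c d

theorem Rect.integrableOn {f : ℝ × ℝ → ℝ} (hf : Continuous f) (a b c d : ℝ) :
    IntegrableOn f (Rect a b c d) := by
  have : IsCompact (Icc a b ×ˢ Icc c d) := isCompact_Icc.prod isCompact_Icc
  exact (hf.continuousOn.integrableOn_compact this).mono_set
    (prod_mono Ioc_subset_Icc_self Ioc_subset_Icc_self)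

theorem Rect.measurableSet (a b c d : ℝ) : MeasurableSet (Rect a b c d) :=
  measurableSet_Ioc.prod measurableSet_Ioc

theorem Rect.volume_real {a b c d : ℝ} (hab : a ≤ b) (hcd : c ≤ d) :
    (volume : Measure (ℝ × ℝ)).real (Rect a b c d) = (b - a) * (d - c) := by
  rw [Rect, Measure.volume_eq_prod, measureReal_prod_prod]
  simp [hab, hcd]

theorem continuous_partial {g : ℝ × ℝ → ℝ} (hg : ContDiff ℝ 1 g) (e : ℝ × ℝ) :
    Continuous fun p => fderiv ℝ g p e :=
  (hg.continuous_fderiv (by simp)).clm_apply continuous_const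

theorem continuous_gradSq2 {g : ℝ × ℝ → ℝ} (hg : ContDiff ℝ 1 g) : Continuous (gradSq2 g) :=
  ((continuous_partial hg _).pow 2).add ((continuous_partial hg _).pow 2)

theorem hasDerivAt_fst {g : ℝ × ℝ → ℝ} (hg : ContDiff ℝ 1 g) (x y : ℝ) :
    HasDerivAt (fun t => g (t, y)) (fderiv ℝ g (x, y) (1, 0)) x := by
  have h1 : HasDerivAt (fun t : ℝ => (t, y)) ((1 : ℝ), (0 : ℝ)) x :=
    (hasDerivAt_id _).prodMk (hasDerivAt_const _ _)
  exact (hg.differentiable (by simp) (x, y)).hasFDerivAt.comp_hasDerivAt x h1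

theorem hasDerivAt_snd {g : ℝ × ℝ → ℝ} (hg : ContDiff ℝ 1 g) (x y : ℝ) :
    HasDerivAt (fun t => g (x, t)) (fderiv ℝ g (x, y) (0, 1)) y := by
  have h1 : HasDerivAt (fun t : ℝ => (x, t)) ((0 : ℝ), (1 : ℝ)) y :=
    (hasDerivAt_const _ _).prodMk (hasDerivAt_id _)
  exact (hg.differentiable (by simp) (x, y)).hasFDerivAt.comp_hasDerivAt y h1

/-- Integrating over the rectangle a quantity already integrated in the first variable. -/
theorem Rect.integral_snd {f : ℝ × ℝ → ℝ} (hf : Continuous f) {a b : ℝ} (c d : ℝ) (hab : a ≤ b) :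
    ∫ p in Rect a b c d, (∫ t in Ioc a b, f (t, p.2)) = (b - a) * ∫ p in Rect a b c d, f p := by
  have hi := Rect.integrableOn hf a b c d
  have e : (volume : Measure (ℝ × ℝ)).restrict (Rect a b c d)
      = (volume.restrict (Ioc a b)).prod (volume.restrict (Ioc c d)) := by
    rw [Rect, Measure.prod_restrict, Measure.volume_eq_prod]
  rw [IntegrableOn, e] at hi
  rw [e, integral_prod_symm _ hi,
    integral_fun_snd (fun y => ∫ t in Ioc a b, f (t, y))]
  simp [hab]

theorem Rect.integral_fst {f : ℝ × ℝ → ℝ} (hf : Continuous f) (a b : ℝ) {c d : ℝ} (hcd : c ≤ d) :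
    ∫ p in Rect a b c d, (∫ t in Ioc c d, f (p.1, t)) = (d - c) * ∫ p in Rect a b c d, f p := by
  have hi := Rect.integrableOn hf a b c d
  have e : (volume : Measure (ℝ × ℝ)).restrict (Rect a b c d)
      = (volume.restrict (Ioc a b)).prod (volume.restrict (Ioc c d)) := by
    rw [Rect, Measure.prod_restrict, Measure.volume_eq_prod]
  rw [IntegrableOn, e] at hi
  rw [e, integral_prod _ hi,
    integral_fun_fst (fun x => ∫ t in Ioc c d, f (x, t))]
  simp [hcd]

/-- Poincaré inequality for the variance on a rectangle of sides at most `h`. It is not divided by the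
area `(b - a) * (d - c)`, so that degenerate rectangles are allowed. -/
theorem Rect.poincare {g : ℝ × ℝ → ℝ} (hg : ContDiff ℝ 1 g) {a b c d h : ℝ} (hab : a ≤ b)
    (hcd : c ≤ d) (hbh : b - a ≤ h) (hdh : d - c ≤ h) :
    (b - a) * (d - c) * (∫ p in Rect a b c d, g p ^ 2) - (∫ p in Rect a b c d, g p) ^ 2 ≤
      (b - a) * (d - c) * h ^ 2 * ∫ p in Rect a b c d, gradSq2 g p := by
  set Q := Rect a b c d with hQ
  set m := (b - a) * (d - c) with hm
  have hQm : MeasurableSet Q := Rect.measurableSet a b c d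
  have hvol : (volume : Measure (ℝ × ℝ)).real Q = m := Rect.volume_real hab hcd
  have hm0 : 0 ≤ m := mul_nonneg (by linarith) (by linarith)
  have hc1 := (continuous_partial hg (1, 0)).pow 2
  have hc2 := (continuous_partial hg (0, 1)).pow 2
  have hI : ∀ {f : ℝ × ℝ → ℝ}, Continuous f → IntegrableOn f Q := fun hf =>
    Rect.integrableOn hf a b c d
  set Φ : ℝ → ℝ := fun y => ∫ t in Ioc a b, (fderiv ℝ g (t, y) (1, 0)) ^ 2 with hΦ
  set Ψ : ℝ → ℝ := fun x => ∫ t in Ioc c d, (fderiv ℝ g (x, t) (0, 1)) ^ 2 with hΨ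
  have hΦc : Continuous Φ := by
    have : Continuous fun y : ℝ => ∫ t in a..b, (fderiv ℝ g (t, y) (1, 0)) ^ 2 :=
      intervalIntegral.continuous_parametric_intervalIntegral_of_continuous'
        (by exact hc1.comp (continuous_snd.prodMk continuous_fst)) a b
    simpa [intervalIntegral.integral_of_le hab] using this
  have hΨc : Continuous Ψ := by
    have : Continuous fun x : ℝ => ∫ t in c..d, (fderiv ℝ g (x, t) (0, 1)) ^ 2 :=
      intervalIntegral.continuous_parametric_intervalIntegral_of_continuous'
        (by exact hc2) c d
    simpa [intervalIntegral.integral_of_le hcd] using this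
  -- `x` and `y` are joined by a horizontal and a vertical segment through `(y.1, x.2)`
  have hpt : ∀ x ∈ Q, ∀ y ∈ Q,
      (g x - g y) ^ 2 ≤ 2 * (b - a) * Φ x.2 + 2 * (d - c) * Ψ y.1 := by
    intro x hx y hy
    have h1 := sq_sub_le_integral_deriv (φ := fun t => g (t, x.2)) (fun t => hasDerivAt_fst hg t x.2)
      ((continuous_partial hg _).comp (Continuous.prodMk_left _)) hx.1 hy.1
    have h2 := sq_sub_le_integral_deriv (φ := fun t => g (y.1, t)) (fun t => hasDerivAt_snd hg y.1 t)
      ((continuous_partial hg _).comp (Continuous.prodMk_right _)) hx.2 hy.2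
    have e : g x - g y = (g (x.1, x.2) - g (y.1, x.2)) + (g (y.1, x.2) - g (y.1, y.2)) := by
      simp
    rw [e]
    simp only [hΦ, hΨ]
    nlinarith [sq_nonneg ((g (x.1, x.2) - g (y.1, x.2)) - (g (y.1, x.2) - g (y.1, y.2)))]
  set I1 := ∫ p in Q, (fderiv ℝ g p (1, 0)) ^ 2 with hI1
  set I2 := ∫ p in Q, (fderiv ℝ g p (0, 1)) ^ 2 with hI2
  have hΦI : ∫ p in Q, Φ p.2 = (b - a) * I1 := Rect.integral_snd hc1 c d hab
  have hΨI : ∫ p in Q, Ψ p.1 = (d - c) * I2 := Rect.integral_fst hc2 a b hcd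
  set G2 := ∫ p in Q, g p ^ 2 with hG2
  set G1 := ∫ p in Q, g p with hG1
  have hgc := hg.continuous
  -- integrate the pointwise bound in `x`, then in `y`
  have hy : ∀ y ∈ Q, G2 - 2 * g y * G1 + m * g y ^ 2 ≤
      2 * (b - a) * ((b - a) * I1) + m * (2 * (d - c) * Ψ y.1) := by
    intro y hy
    have h1 : ∫ x in Q, (g x - g y) ^ 2 ≤ ∫ x in Q, (2 * (b - a) * Φ x.2 + 2 * (d - c) * Ψ y.1) :=
      setIntegral_mono_on (hI (by fun_prop)) (hI (by fun_prop)) hQm (fun x hx => hpt x hx y hy)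
    have e1 : ∫ x in Q, (g x - g y) ^ 2 = G2 - 2 * g y * G1 + m * g y ^ 2 := by
      have : ∀ x, (g x - g y) ^ 2 = g x ^ 2 - 2 * g y * g x + g y ^ 2 := fun x => by ring
      simp_rw [this]
      rw [integral_add (hI (by fun_prop)) (hI (by fun_prop)),
        integral_sub (hI (by fun_prop)) (hI (by fun_prop)), integral_const_mul, setIntegral_const,
        hvol, smul_eq_mul]
    have e2 : ∫ x in Q, (2 * (b - a) * Φ x.2 + 2 * (d - c) * Ψ y.1) =
        2 * (b - a) * ((b - a) * I1) + m * (2 * (d - c) * Ψ y.1) := by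
      rw [integral_add (hI (by fun_prop)) (hI (by fun_prop)), integral_const_mul, hΦI,
        setIntegral_const, hvol, smul_eq_mul]
    rwa [e1, e2] at h1
  have h2 : ∫ y in Q, (G2 - 2 * g y * G1 + m * g y ^ 2) ≤
      ∫ y in Q, (2 * (b - a) * ((b - a) * I1) + m * (2 * (d - c) * Ψ y.1)) :=
    setIntegral_mono_on (hI (by fun_prop)) (hI (by fun_prop)) hQm hy
  have e1 : ∫ y in Q, (G2 - 2 * g y * G1 + m * g y ^ 2) = 2 * (m * G2 - G1 ^ 2) := by
    have : ∀ y, G2 - 2 * g y * G1 + m * g y ^ 2 = G2 - (2 * G1) * g y + m * g y ^ 2 :=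
      fun y => by ring
    simp_rw [this]
    rw [integral_add (hI (by fun_prop)) (hI (by fun_prop)),
        integral_sub (hI (by fun_prop)) (hI (by fun_prop)), integral_const_mul, setIntegral_const,
        hvol, smul_eq_mul, integral_const_mul]
    ring
  have e2 : ∫ y in Q, (2 * (b - a) * ((b - a) * I1) + m * (2 * (d - c) * Ψ y.1)) =
      2 * m * ((b - a) ^ 2 * I1 + (d - c) ^ 2 * I2) := by
    rw [integral_add (hI (by fun_prop)) (hI (by fun_prop)), setIntegral_const,
      integral_const_mul, integral_const_mul, hΨI, hvol, smul_eq_mul]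
    ring
  have e3 : ∫ p in Q, gradSq2 g p = I1 + I2 := by
    simp only [gradSq2]
    exact integral_add (hI hc1) (hI hc2)
  rw [e1, e2] at h2
  rw [e3]
  have hI1n : 0 ≤ I1 := integral_nonneg fun _ => sq_nonneg _
  have hI2n : 0 ≤ I2 := integral_nonneg fun _ => sq_nonneg _
  have hb2 : (b - a) ^ 2 ≤ h ^ 2 := by nlinarith
  have hd2 : (d - c) ^ 2 ≤ h ^ 2 := by nlinarith
  have : m * ((b - a) ^ 2 * I1 + (d - c) ^ 2 * I2) ≤ m * (h ^ 2 * I1 + h ^ 2 * I2) := by gcongr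
  nlinarith

/-! ### Geometry of `Γ_R` and finite-rank approximation -/

/-- On `Q` the squared `L²` norm of a `C¹` function is at most `ε` times its Dirichlet energy plus a
quadratic form of finite rank, given by a list of pairs (coefficient, set over which the function is
integrated). -/
def FinApprox (ε : ℝ) (Q : Set (ℝ × ℝ)) : Prop :=
  ∃ L : List (ℝ × Set (ℝ × ℝ)), (∀ q ∈ L, MeasurableSet q.2 ∧ q.2 ⊆ Q) ∧
    ∀ g : ℝ × ℝ → ℝ, ContDiff ℝ 1 g →
      ∫ p in Q, g p ^ 2 ≤ ε * (∫ p in Q, gradSq2 g p) +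
        (L.map fun q => q.1 * (∫ p in q.2, g p) ^ 2).sum

theorem FinApprox.union {ε : ℝ} {Q₁ Q₂ : Set (ℝ × ℝ)} (h₁ : FinApprox ε Q₁) (h₂ : FinApprox ε Q₂)
    (hd : Disjoint Q₁ Q₂) (hm : MeasurableSet Q₂)
    (hI₁ : ∀ f : ℝ × ℝ → ℝ, Continuous f → IntegrableOn f Q₁)
    (hI₂ : ∀ f : ℝ × ℝ → ℝ, Continuous f → IntegrableOn f Q₂) : FinApprox ε (Q₁ ∪ Q₂) := by
  obtain ⟨L₁, hL₁, h₁⟩ := h₁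
  obtain ⟨L₂, hL₂, h₂⟩ := h₂
  refine ⟨L₁ ++ L₂, fun q hq => ?_, fun g hg => ?_⟩
  · rcases List.mem_append.1 hq with hq | hq
    · exact ⟨(hL₁ q hq).1, (hL₁ q hq).2.trans subset_union_left⟩
    · exact ⟨(hL₂ q hq).1, (hL₂ q hq).2.trans subset_union_right⟩
  · have c1 : Continuous fun p => g p ^ 2 := hg.continuous.pow 2
    rw [setIntegral_union hd hm (hI₁ _ c1) (hI₂ _ c1),
      setIntegral_union hd hm (hI₁ _ (continuous_gradSq2 hg)) (hI₂ _ (continuous_gradSq2 hg)),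
      List.map_append, List.sum_append]
    linarith [h₁ g hg, h₂ g hg]

theorem Rect.finApprox_small {a b c d h : ℝ} (hab : a ≤ b) (hcd : c ≤ d) (hbh : b - a ≤ h)
    (hdh : d - c ≤ h) : FinApprox (h ^ 2) (Rect a b c d) := by
  have hm0 : 0 ≤ (b - a) * (d - c) := mul_nonneg (by linarith) (by linarith)
  refine ⟨[(((b - a) * (d - c))⁻¹, Rect a b c d)], ?_, fun g hg => ?_⟩
  · simpa using Rect.measurableSet a b c d
  · have hp := Rect.poincare hg hab hcd hbh hdh
    have hG : 0 ≤ ∫ p in Rect a b c d, gradSq2 g p :=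
      integral_nonneg fun _ => add_nonneg (sq_nonneg _) (sq_nonneg _)
    simp only [List.map_cons, List.map_nil, List.sum_cons, List.sum_nil, add_zero]
    rcases hm0.eq_or_lt with hm | hm
    · have hv : (volume : Measure (ℝ × ℝ)) (Rect a b c d) = 0 := by
        rw [Rect, Measure.volume_eq_prod, Measure.prod_prod, Real.volume_Ioc, Real.volume_Ioc,
          ← ENNReal.ofReal_mul (by linarith), ← hm, ENNReal.ofReal_zero]
      have : (∫ p in Rect a b c d, g p ^ 2) = 0 := setIntegral_measure_zero _ hv
      rw [this, ← hm]
      simp only [inv_zero, zero_mul, add_zero]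
      positivity
    · set m := (b - a) * (d - c)
      have h1 := mul_le_mul_of_nonneg_left hp (inv_nonneg.2 hm.le)
      have e1 : m⁻¹ * (m * (∫ p in Rect a b c d, g p ^ 2) - (∫ p in Rect a b c d, g p) ^ 2) =
        (∫ p in Rect a b c d, g p ^ 2) - m⁻¹ * (∫ p in Rect a b c d, g p) ^ 2 := by field_simp
      have e2 : m⁻¹ * (m * h ^ 2 * ∫ p in Rect a b c d, gradSq2 g p) =
        h ^ 2 * ∫ p in Rect a b c d, gradSq2 g p := by field_simp
      rw [e1, e2] at h1
      linarith

/-- Repeated bisection reduces an arbitrary rectangle to rectangles of side at most `h`. -/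
theorem Rect.finApprox_dyadic {h : ℝ} (n k : ℕ) : ∀ {a b c d : ℝ}, a ≤ b → c ≤ d →
    b - a ≤ 2 ^ n * h → d - c ≤ 2 ^ k * h → FinApprox (h ^ 2) (Rect a b c d) := by
  induction n with
  | zero =>
    induction k with
    | zero => intro a b c d hab hcd h1 h2; exact Rect.finApprox_small hab hcd (by simpa using h1)
                (by simpa using h2)
    | succ k ih =>
      intro a b c d hab hcd h1 h2
      have e : Rect a b c d = Rect a b c ((c + d) / 2) ∪ Rect a b ((c + d) / 2) d := by
        rw [Rect, Rect, Rect, ← prod_union, Ioc_union_Ioc_eq_Ioc (by linarith) (by linarith)]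
      rw [e]
      rw [pow_succ] at h2
      refine FinApprox.union (ih hab (by linarith) h1 (by linarith))
        (ih hab (by linarith) h1 (by linarith)) ?_ (Rect.measurableSet _ _ _ _)
        (fun f hf => Rect.integrableOn hf _ _ _ _) (fun f hf => Rect.integrableOn hf _ _ _ _)
      exact Disjoint.set_prod_right (Ioc_disjoint_Ioc_of_le le_rfl) _ _
  | succ n ih =>
    intro a b c d hab hcd h1 h2
    have e : Rect a b c d = Rect a ((a + b) / 2) c d ∪ Rect ((a + b) / 2) b c d := by
      rw [Rect, Rect, Rect, ← union_prod, Ioc_union_Ioc_eq_Ioc (by linarith) (by linarith)]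
    rw [e]
    rw [pow_succ] at h1
    refine FinApprox.union (ih (by linarith) hcd (by linarith) h2)
      (ih (by linarith) hcd (by linarith) h2) ?_ (Rect.measurableSet _ _ _ _)
      (fun f hf => Rect.integrableOn hf _ _ _ _) (fun f hf => Rect.integrableOn hf _ _ _ _)
    exact Disjoint.set_prod_left (Ioc_disjoint_Ioc_of_le le_rfl) _ _

theorem Rect.finApprox {a b c d ε : ℝ} (hε : 0 < ε) (hab : a ≤ b) (hcd : c ≤ d) :
    FinApprox ε (Rect a b c d) := by
  have hh : 0 < √ε := Real.sqrt_pos.2 hε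
  obtain ⟨n, hn⟩ := pow_unbounded_of_one_lt ((b - a) / √ε) (one_lt_two)
  obtain ⟨k, hk⟩ := pow_unbounded_of_one_lt ((d - c) / √ε) (one_lt_two)
  rw [← Real.sq_sqrt hε.le]
  exact Rect.finApprox_dyadic n k hab hcd ((div_lt_iff₀ hh).1 hn).le ((div_lt_iff₀ hh).1 hk).le

theorem mem_GamR {R : ℝ} (p : ℝ × ℝ) : p ∈ GamR R ↔
    (-1 < p.1 ∧ -1 < p.2) ∧ (p.1 < 0 ∨ p.2 < 0) ∧ p.1 < R ∧ p.2 < R := by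
  simp only [GamR, Gam, Box, mem_inter_iff, mem_ofPred_eq, lt_min_iff, min_lt_iff, abs_lt]
  constructor
  · rintro ⟨⟨h1, h2⟩, h3, h4⟩
    exact ⟨h1, h2, by linarith, by linarith⟩
  · rintro ⟨h1, h2, h3, h4⟩
    exact ⟨⟨h1, h2⟩, ⟨by linarith, by linarith⟩, by linarith, by linarith⟩

theorem isOpen_GamR (R : ℝ) : IsOpen (GamR R) := by
  have hG : GamR R = ({p : ℝ × ℝ | -1 < p.1} ∩ {p | -1 < p.2}) ∩
      (({p | p.1 < 0} ∪ {p | p.2 < 0}) ∩ ({p | p.1 < R} ∩ {p | p.2 < R})) := by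
    ext p; exact mem_GamR p
  have l1 (c : ℝ) : IsOpen {p : ℝ × ℝ | p.1 < c} := isOpen_lt continuous_fst continuous_const
  have l2 (c : ℝ) : IsOpen {p : ℝ × ℝ | p.2 < c} := isOpen_lt continuous_snd continuous_const
  have g1 (c : ℝ) : IsOpen {p : ℝ × ℝ | c < p.1} := isOpen_lt continuous_const continuous_fst
  have g2 (c : ℝ) : IsOpen {p : ℝ × ℝ | c < p.2} := isOpen_lt continuous_const continuous_snd
  rw [hG]
  exact ((g1 _).inter (g2 _)).inter (((l1 _).union (l2 _)).inter ((l1 _).inter (l2 _)))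

theorem ae_ne_fst (x : ℝ) : ∀ᵐ p : ℝ × ℝ, p.1 ≠ x := by
  rw [Measure.volume_eq_prod]
  exact Measure.quasiMeasurePreserving_fst.ae (Measure.ae_ne volume x)

theorem ae_ne_snd (x : ℝ) : ∀ᵐ p : ℝ × ℝ, p.2 ≠ x := by
  rw [Measure.volume_eq_prod]
  exact Measure.quasiMeasurePreserving_snd.ae (Measure.ae_ne volume x)

/-- Up to a null set the finite guide is a disjoint union of two rectangles. -/
theorem GamR_ae_eq {R : ℝ} (hR : 0 < R) :
    GamR R =ᵐ[volume] (Rect (-1) 0 (-1) R ∪ Rect 0 R (-1) 0 : Set (ℝ × ℝ)) := by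
  rw [Filter.eventuallyEq_set]
  filter_upwards [ae_ne_fst 0, ae_ne_fst R, ae_ne_snd 0, ae_ne_snd R] with p h1 h2 h3 h4
  rw [mem_GamR]
  simp only [Rect, mem_union, mem_prod, mem_Ioc]
  grind

/-- The estimate of `FinApprox` on `Γ_R`, with the finitely many integrals taken with respect to the
restricted measure. -/
theorem GamR_finApprox {R ε : ℝ} (hR : 0 < R) (hε : 0 < ε) :
    ∃ L : List (ℝ × Set (ℝ × ℝ)), (∀ q ∈ L, MeasurableSet q.2) ∧
    ∀ g : ℝ × ℝ → ℝ, ContDiff ℝ 1 g →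
      ∫ p in GamR R, g p ^ 2 ≤ ε * (∫ p in GamR R, gradSq2 g p) +
        (L.map fun q => q.1 * (∫ p in q.2, g p ∂(volume.restrict (GamR R))) ^ 2).sum := by
  have h : FinApprox ε (Rect (-1) 0 (-1) R ∪ Rect 0 R (-1) 0) := by
    refine FinApprox.union (Rect.finApprox hε (by linarith) (by linarith))
      (Rect.finApprox hε hR.le (by linarith)) ?_ (Rect.measurableSet _ _ _ _)
      (fun f hf => Rect.integrableOn hf _ _ _ _) (fun f hf => Rect.integrableOn hf _ _ _ _)
    exact Disjoint.set_prod_left (Ioc_disjoint_Ioc_of_le le_rfl) _ _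
  obtain ⟨L, hL, h⟩ := h
  have e := Measure.restrict_congr_set (GamR_ae_eq hR)
  refine ⟨L, fun q hq => (hL q hq).1, fun g hg => ?_⟩
  rw [e]
  convert h g hg using 3
  refine List.map_congr_left fun q hq => ?_
  rw [Measure.restrict_restrict (hL q hq).1, inter_eq_left.2 (hL q hq).2]

theorem GamR_integrableOn {f : ℝ × ℝ → ℝ} (hf : Continuous f) (R : ℝ) :
    IntegrableOn f (GamR R) := by
  have : IsCompact (Icc (-1) R ×ˢ Icc (-1) R) := isCompact_Icc.prod isCompact_Icc
  refine (hf.continuousOn.integrableOn_compact this).mono_set fun p hp => ?_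
  rw [mem_GamR] at hp
  exact ⟨⟨hp.1.1.le, hp.2.2.1.le⟩, ⟨hp.1.2.le, hp.2.2.2.le⟩⟩

/-- The Dirichlet part of the boundary consists of the frontier points off the lines `xⱼ = R`. -/
theorem DirB_eq {R : ℝ} (hR : 0 < R) : DirB R = frontier (GamR R) ∩ {p | p.1 < R ∧ p.2 < R} := by
  have hcl : closure (GamR R) ⊆ Icc (-1) R ×ˢ Icc (-1) R := by
    refine closure_minimal (fun p hp => ?_) (isClosed_Icc.prod isClosed_Icc)
    rw [mem_GamR] at hp
    exact ⟨⟨hp.1.1.le, hp.2.2.1.le⟩, ⟨hp.1.2.le, hp.2.2.2.le⟩⟩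
  have hbox : Box (R + 1) = Ioo (-2 - R) R ×ˢ Ioo (-2 - R) R := by
    ext p
    simp only [Box, mem_ofPred_eq, abs_lt, mem_prod, mem_Ioo]
    constructor
    · rintro ⟨⟨h1, h2⟩, h3, h4⟩; refine ⟨⟨?_, ?_⟩, ?_, ?_⟩ <;> linarith
    · rintro ⟨⟨h1, h2⟩, h3, h4⟩; refine ⟨⟨?_, ?_⟩, ?_, ?_⟩ <;> linarith
  have hopen : IsOpen (Box (R + 1)) := by rw [hbox]; exact isOpen_Ioo.prod isOpen_Ioo
  have hclb : closure (Box (R + 1)) = Icc (-2 - R) R ×ˢ Icc (-2 - R) R := by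
    rw [hbox, closure_prod_eq, closure_Ioo (by linarith)]
  ext p
  simp only [DirB, Sig, Set.mem_sdiff, mem_inter_iff, not_and, mem_ofPred_eq]
  refine and_congr_right fun hp => ?_
  have hpc := hcl (frontier_subset_closure hp)
  rw [hopen.frontier_eq, hclb, hbox]
  simp only [mem_prod, mem_Icc, mem_Ioo, Set.mem_sdiff] at hpc ⊢
  constructor
  · intro h
    have := h hp
    grind
  · intro h _
    grind

/-! ### Form domain and Rellich compactness -/

/-- Lebesgue measure on `Γ_R`. -/
abbrev muR (R : ℝ) : Measure (ℝ × ℝ) := volume.restrict (GamR R)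

instance muR_finite (R : ℝ) : IsFiniteMeasure (muR R) := by
  refine ⟨?_⟩
  rw [Measure.restrict_apply_univ]
  have h : IsCompact (Icc (-1) R ×ˢ Icc (-1) R) := isCompact_Icc.prod isCompact_Icc
  refine (measure_mono fun p hp => ?_).trans_lt h.measure_lt_top
  rw [mem_GamR] at hp
  exact ⟨⟨hp.1.1.le, hp.2.2.1.le⟩, ⟨hp.1.2.le, hp.2.2.2.le⟩⟩

/-- The space `L²(Γ_R)`. -/
abbrev HR (R : ℝ) := Lp ℝ 2 (muR R)

theorem memLp_muR {f : ℝ × ℝ → ℝ} (hf : Continuous f) (R : ℝ) : MemLp f 2 (muR R) :=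
  (memLp_two_iff_integrable_sq hf.aestronglyMeasurable).2 (GamR_integrableOn (hf.pow 2) R)

/-- The class in `L²(Γ_R)` of a continuous function. -/
def clR (R : ℝ) {f : ℝ × ℝ → ℝ} (hf : Continuous f) : HR R := (memLp_muR hf R).toLp f

theorem coeFn_clR (R : ℝ) {f : ℝ × ℝ → ℝ} (hf : Continuous f) : clR R hf =ᵐ[muR R] f :=
  MemLp.coeFn_toLp _

theorem inner_HR {R : ℝ} (f g : HR R) : ⟪f, g⟫ = ∫ p, f p * g p ∂(muR R) := by
  rw [L2.inner_def]
  exact integral_congr_ae (Eventually.of_forall fun p => by simp [mul_comm])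

theorem inner_clR {R : ℝ} {f g : ℝ × ℝ → ℝ} (hf : Continuous f) (hg : Continuous g) :
    ⟪clR R hf, clR R hg⟫ = ∫ p in GamR R, f p * g p := by
  rw [inner_HR]
  refine integral_congr_ae ?_
  filter_upwards [coeFn_clR R hf, coeFn_clR R hg] with p h1 h2
  rw [h1, h2]

theorem norm_sq_clR {R : ℝ} {f : ℝ × ℝ → ℝ} (hf : Continuous f) :
    ‖clR R hf‖ ^ 2 = ∫ p in GamR R, f p ^ 2 := by
  rw [← real_inner_self_eq_norm_sq, inner_clR]
  simp_rw [pow_two]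

theorem norm_sq_HR {R : ℝ} (f : HR R) : ‖f‖ ^ 2 = ∫ p, f p ^ 2 ∂(muR R) := by
  rw [← real_inner_self_eq_norm_sq, inner_HR]
  simp_rw [pow_two]

/-- The space of admissible functions. -/
def AdmS (R : ℝ) : Submodule ℝ (ℝ × ℝ → ℝ) where
  carrier := {u | AdmR R u}
  add_mem' := fun {u v} hu hv => ⟨hu.1.add hv.1, fun p hp => by simp [hu.2 p hp, hv.2 p hp]⟩
  zero_mem' := ⟨contDiff_const, fun p _ => rfl⟩
  smul_mem' := fun c u hu => ⟨hu.1.const_smul c, fun p hp => by simp [hu.2 p hp]⟩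

theorem AdmS.fderiv_add {R : ℝ} (u v : AdmS R) (p e : ℝ × ℝ) :
    fderiv ℝ (u + v : AdmS R) p e
      = fderiv ℝ (u : ℝ × ℝ → ℝ) p e + fderiv ℝ (v : ℝ × ℝ → ℝ) p e := by
  rw [Submodule.coe_add, _root_.fderiv_add (u.2.1.differentiable (by simp) p)
    (v.2.1.differentiable (by simp) p)]
  rfl

theorem AdmS.fderiv_smul {R : ℝ} (c : ℝ) (u : AdmS R) (p e : ℝ × ℝ) :
    fderiv ℝ (c • u : AdmS R) p e = c * fderiv ℝ (u : ℝ × ℝ → ℝ) p e := by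
  rw [Submodule.coe_smul, _root_.fderiv_const_smul (u.2.1.differentiable (by simp) p)]
  rfl

/-- `u ↦ u` as a map into `L²`. -/
def J0 (R : ℝ) : AdmS R →ₗ[ℝ] HR R where
  toFun u := clR R u.2.1.continuous
  map_add' u v := (MemLp.toLp_add (memLp_muR u.2.1.continuous R) (memLp_muR v.2.1.continuous R))
  map_smul' c u := (MemLp.toLp_const_smul c (memLp_muR u.2.1.continuous R))

/-- `u ↦ ∂_e u` as a map into `L²`. -/
def D0 (R : ℝ) (e : ℝ × ℝ) : AdmS R →ₗ[ℝ] HR R where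
  toFun u := clR R (continuous_partial u.2.1 e)
  map_add' u v := by
    unfold clR
    rw [← MemLp.toLp_add]
    congr 1
    funext p
    exact AdmS.fderiv_add u v p e
  map_smul' c u := by
    unfold clR
    rw [RingHom.id_apply, ← MemLp.toLp_const_smul]
    congr 1
    funext p
    exact AdmS.fderiv_smul c u p e

/-- The graph embedding `u ↦ (u, ∂₁u, ∂₂u)`. -/
def emb (R : ℝ) : AdmS R →ₗ[ℝ] PiLp 2 (fun _ : Fin 3 => HR R) :=
  (WithLp.linearEquiv 2 ℝ (Fin 3 → HR R)).symm.toLinearMap ∘ₗ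
    LinearMap.pi ![J0 R, D0 R (1, 0), D0 R (0, 1)]

/-- The form domain: the `H¹`-closure of the admissible functions, realized as the closure in
`L²(Γ_R)³` of the set of triples `(u, ∂₁u, ∂₂u)`. It is a `def` with its own instances, so that it
is not unfolded to a subspace. -/
def VR (R : ℝ) : Type := ↥(LinearMap.range (emb R)).topologicalClosure

instance (R : ℝ) : NormedAddCommGroup (VR R) :=
  inferInstanceAs (NormedAddCommGroup ↥(LinearMap.range (emb R)).topologicalClosure)

instance (R : ℝ) : InnerProductSpace ℝ (VR R) :=
  inferInstanceAs (InnerProductSpace ℝ ↥(LinearMap.range (emb R)).topologicalClosure)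

instance (R : ℝ) : CompleteSpace (VR R) :=
  inferInstanceAs (CompleteSpace ↥(LinearMap.range (emb R)).topologicalClosure)

/-- The inclusion of the form domain in the product space. -/
def subR (R : ℝ) : VR R →L[ℝ] PiLp 2 (fun _ : Fin 3 => HR R) :=
  Submodule.subtypeL (LinearMap.range (emb R)).topologicalClosure

/-- The inclusion of the admissible functions into the form domain. -/
def inc (R : ℝ) : AdmS R →ₗ[ℝ] VR R :=
  (emb R).codRestrict (LinearMap.range (emb R)).topologicalClosure fun u =>
    (LinearMap.range (emb R)).le_topologicalClosure (LinearMap.mem_range_self _ u)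

/-- Coordinate projections of the form domain. -/
def prR (R : ℝ) (i : Fin 3) : VR R →L[ℝ] HR R :=
  (PiLp.proj 2 (fun _ : Fin 3 => HR R) i).comp (subR R)

/-- The inclusion of the form domain in `L²(Γ_R)`, extending `u ↦ u`. -/
abbrev JR (R : ℝ) : VR R →L[ℝ] HR R := prR R 0

/-- The weak derivative extending `u ↦ ∂₁u`. -/
abbrev D1R (R : ℝ) : VR R →L[ℝ] HR R := prR R 1

/-- The weak derivative extending `u ↦ ∂₂u`. -/
abbrev D2R (R : ℝ) : VR R →L[ℝ] HR R := prR R 2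

theorem JR_inc {R : ℝ} (u : AdmS R) : JR R (inc R u) = clR R u.2.1.continuous := rfl
theorem D1R_inc {R : ℝ} (u : AdmS R) :
    D1R R (inc R u) = clR R (continuous_partial u.2.1 (1, 0)) := rfl
theorem D2R_inc {R : ℝ} (u : AdmS R) :
    D2R R (inc R u) = clR R (continuous_partial u.2.1 (0, 1)) := rfl

theorem inner_VR {R : ℝ} (v w : VR R) :
    ⟪v, w⟫ = ⟪JR R v, JR R w⟫ + ⟪D1R R v, D1R R w⟫ + ⟪D2R R v, D2R R w⟫ := by
  have h : ⟪v, w⟫ = ⟪subR R v, subR R w⟫ := rfl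
  rw [h, PiLp.inner_apply, Fin.sum_univ_three]
  rfl

theorem norm_sq_VR {R : ℝ} (v : VR R) :
    ‖v‖ ^ 2 = ‖JR R v‖ ^ 2 + ‖D1R R v‖ ^ 2 + ‖D2R R v‖ ^ 2 := by
  simp only [← real_inner_self_eq_norm_sq, inner_VR]

theorem norm_JR_le {R : ℝ} (v : VR R) : ‖JR R v‖ ≤ ‖v‖ := by
  have := norm_sq_VR v
  nlinarith [norm_nonneg v, norm_nonneg (JR R v), sq_nonneg ‖D1R R v‖, sq_nonneg ‖D2R R v‖]

theorem dense_inc (R : ℝ) : DenseRange (inc R) := by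
  intro v
  rw [mem_closure_iff_seq_limit]
  have hv : subR R v ∈ closure (LinearMap.range (emb R) : Set _) := v.2
  obtain ⟨x, hx, hl⟩ := mem_closure_iff_seq_limit.1 hv
  choose u hu using hx
  refine ⟨fun n => inc R (u n), fun n => ⟨u n, rfl⟩, ?_⟩
  exact tendsto_subtype_rng.2 (hl.congr fun n => (hu n).symm)

theorem exists_seq_inc {R : ℝ} (v : VR R) :
    ∃ u : ℕ → AdmS R, Tendsto (fun n => inc R (u n)) atTop (𝓝 v) := by
  obtain ⟨x, hx, hl⟩ := mem_closure_iff_seq_limit.1 (dense_inc R v)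
  choose u hu using hx
  exact ⟨u, hl.congr fun n => (hu n).symm⟩

theorem grad_sum {R : ℝ} (u : AdmS R) :
    ∫ p in GamR R, gradSq2 u p = ‖D1R R (inc R u)‖ ^ 2 + ‖D2R R (inc R u)‖ ^ 2 := by
  rw [D1R_inc, D2R_inc, norm_sq_clR, norm_sq_clR, ← integral_add]
  · rfl
  · exact GamR_integrableOn ((continuous_partial u.2.1 _).pow 2) R
  · exact GamR_integrableOn ((continuous_partial u.2.1 _).pow 2) R

/-- Rellich: the inclusion of the form domain in `L²` is compact. -/
theorem JR_compact {R : ℝ} (hR : 0 < R) : IsCompactOperator (JR R) := by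
  classical
  refine isCompactOperator_of_finite_codim (JR R) fun ε hε => ?_
  obtain ⟨L, hLm, hL⟩ := GamR_finApprox hR (pow_pos hε 2)
  -- the functional `v ↦ ∫_{Q} v` is represented by this vector
  let ind : Set (ℝ × ℝ) → HR R := fun Q =>
    if h : MeasurableSet Q then indicatorConstLp 2 h (measure_ne_top (muR R) Q) (1 : ℝ) else 0
  have hind (Q : Set (ℝ × ℝ)) (hQ : MeasurableSet Q) (f : HR R) :
      ⟪ind Q, f⟫ = ∫ p in Q, f p ∂(muR R) := by
    simp only [ind, hQ, dif_pos]
    rw [L2.inner_indicatorConstLp_one]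
  let g : Set (ℝ × ℝ) → VR R := fun Q => (JR R).adjoint (ind Q)
  refine ⟨(fun q => g q.2) '' {q | q ∈ L}, (List.finite_toSet L).image _, fun v hv => ?_⟩
  have key : ∀ w : VR R, ‖JR R w‖ ^ 2 ≤ ε ^ 2 * ‖w‖ ^ 2 +
      (L.map fun q => q.1 * ⟪g q.2, w⟫ ^ 2).sum := by
    have hc : Continuous fun w : VR R => (L.map fun q => q.1 * ⟪g q.2, w⟫ ^ 2).sum := by
      refine continuous_list_sum L fun q _ => ?_
      fun_prop
    intro w
    refine (dense_inc R).induction_on (p := fun w : VR R => ‖JR R w‖ ^ 2 ≤ ε ^ 2 * ‖w‖ ^ 2 +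
      (L.map fun q => q.1 * ⟪g q.2, w⟫ ^ 2).sum) w ?_ ?_
    · exact isClosed_le (by fun_prop) (by fun_prop)
    · intro u
      have h := hL u u.2.1
      rw [grad_sum] at h
      have h2 : (L.map fun q => q.1 * (∫ p in q.2, (u : ℝ × ℝ → ℝ) p ∂(muR R)) ^ 2)
          = L.map fun q => q.1 * ⟪g q.2, inc R u⟫ ^ 2 := by
        refine List.map_congr_left fun q hq => ?_
        simp only [g]
        rw [ContinuousLinearMap.adjoint_inner_left, hind _ (hLm q hq), JR_inc]
        congr 2
        exact integral_congr_ae (EventuallyEq.symm (ae_restrict_of_ae (coeFn_clR R u.2.1.continuous)))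
      rw [h2, ← norm_sq_clR u.2.1.continuous, ← JR_inc] at h
      refine h.trans ?_
      gcongr
      have := norm_sq_VR (inc R u)
      nlinarith [sq_nonneg ‖JR R (inc R u)‖]
  have hz : (L.map fun q => q.1 * ⟪g q.2, v⟫ ^ 2).sum = 0 := by
    refine List.sum_eq_zero fun x hx => ?_
    obtain ⟨q, hq, rfl⟩ := List.mem_map.1 hx
    rw [hv _ ⟨q, hq, rfl⟩]; simp
  have := key v
  rw [hz, add_zero, ← mul_pow] at this
  exact (abs_le_of_sq_le_sq' this (by positivity)).2

/-! ### Eigenvectors and their modulus -/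

/-- A function vanishing on the Dirichlet boundary and positive in the guide. -/
def bump (p : ℝ × ℝ) : ℝ :=
  (p.1 + 1) * (p.2 + 1) * (expNegInvGlue (-p.1) + expNegInvGlue (-p.2))

theorem bump_contDiff : ContDiff ℝ 1 bump := by
  have h1 : ContDiff ℝ 1 expNegInvGlue := expNegInvGlue.contDiff
  unfold bump
  fun_prop

theorem bump_pos {R : ℝ} {p : ℝ × ℝ} (hp : p ∈ GamR R) : 0 < bump p := by
  rw [mem_GamR] at hp
  obtain ⟨⟨h1, h2⟩, h3, -⟩ := hp
  have n1 := expNegInvGlue.nonneg (-p.1)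
  have n2 := expNegInvGlue.nonneg (-p.2)
  have h4 : 0 < expNegInvGlue (-p.1) + expNegInvGlue (-p.2) := by
    rcases h3 with h3 | h3
    · have := expNegInvGlue.pos_of_pos (x := -p.1) (by linarith)
      linarith
    · have := expNegInvGlue.pos_of_pos (x := -p.2) (by linarith)
      linarith
  exact mul_pos (mul_pos (by linarith) (by linarith)) h4

theorem bump_adm {R : ℝ} (hR : 0 < R) : AdmR R bump := by
  refine ⟨bump_contDiff, fun p hp => ?_⟩
  rw [DirB_eq hR] at hp
  obtain ⟨hf, h1, h2⟩ := hp
  rw [(isOpen_GamR R).frontier_eq] at hf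
  have hcl : p ∈ Icc (-1) R ×ˢ Icc (-1) R := by
    refine closure_minimal (fun p hp => ?_) (isClosed_Icc.prod isClosed_Icc) hf.1
    rw [mem_GamR] at hp
    exact ⟨⟨hp.1.1.le, hp.2.2.1.le⟩, ⟨hp.1.2.le, hp.2.2.2.le⟩⟩
  have hn := hf.2
  rw [mem_GamR] at hn
  by_cases c1 : p.1 = -1
  · simp [bump, c1]
  by_cases c2 : p.2 = -1
  · simp [bump, c2]
  have d1 : -1 < p.1 := lt_of_le_of_ne hcl.1.1 (Ne.symm c1)
  have d2 : -1 < p.2 := lt_of_le_of_ne hcl.2.1 (Ne.symm c2)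
  have e1 : 0 ≤ p.1 := by
    by_contra h
    exact hn ⟨⟨d1, d2⟩, Or.inl (not_le.1 h), h1, h2⟩
  have e2 : 0 ≤ p.2 := by
    by_contra h
    exact hn ⟨⟨d1, d2⟩, Or.inr (not_le.1 h), h1, h2⟩
  simp [bump, expNegInvGlue.zero_of_nonpos (show -p.1 ≤ 0 by linarith),
    expNegInvGlue.zero_of_nonpos (show -p.2 ≤ 0 by linarith)]

/-- The regularized modulus `√(u²+δ²) - δ`. -/
def regAbs (δ : ℝ) (u : ℝ × ℝ → ℝ) (p : ℝ × ℝ) : ℝ := √(u p ^ 2 + δ ^ 2) - δ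

theorem regAbs_nonneg {δ : ℝ} (u : ℝ × ℝ → ℝ) (p : ℝ × ℝ) : 0 ≤ regAbs δ u p := by
  have : δ ≤ √(u p ^ 2 + δ ^ 2) := Real.le_sqrt_of_sq_le (by nlinarith [sq_nonneg (u p)])
  unfold regAbs
  linarith

theorem regAbs_le {δ : ℝ} (hδ : 0 < δ) (u : ℝ × ℝ → ℝ) (p : ℝ × ℝ) : regAbs δ u p ≤ |u p| := by
  have : √(u p ^ 2 + δ ^ 2) ≤ |u p| + δ := by
    refine Real.sqrt_le_iff.2 ⟨by positivity, ?_⟩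
    nlinarith [sq_abs (u p), abs_nonneg (u p), mul_nonneg (abs_nonneg (u p)) hδ.le]
  unfold regAbs
  linarith

theorem le_regAbs {δ : ℝ} (u : ℝ × ℝ → ℝ) (p : ℝ × ℝ) : |u p| - δ ≤ regAbs δ u p := by
  have : |u p| ≤ √(u p ^ 2 + δ ^ 2) :=
    Real.le_sqrt_of_sq_le (by nlinarith [sq_abs (u p), sq_nonneg δ])
  unfold regAbs
  linarith

theorem regAbs_contDiff {δ : ℝ} (hδ : 0 < δ) {u : ℝ × ℝ → ℝ} (hu : ContDiff ℝ 1 u) :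
    ContDiff ℝ 1 (regAbs δ u) :=
  (((hu.pow 2).add contDiff_const).sqrt fun p => by positivity).sub contDiff_const

theorem regAbs_adm {R δ : ℝ} (hδ : 0 < δ) {u : ℝ × ℝ → ℝ} (hu : AdmR R u) :
    AdmR R (regAbs δ u) := by
  refine ⟨regAbs_contDiff hδ hu.1, fun p hp => ?_⟩
  simp [regAbs, hu.2 p hp, Real.sqrt_sq hδ.le]

theorem regAbs_fderiv {δ : ℝ} (hδ : 0 < δ) {u : ℝ × ℝ → ℝ} (hu : ContDiff ℝ 1 u) (p e : ℝ × ℝ) :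
    (fderiv ℝ (regAbs δ u) p e) ^ 2 ≤ (fderiv ℝ u p e) ^ 2 := by
  have h0 : 0 < u p ^ 2 + δ ^ 2 := by positivity
  have h1 : HasFDerivAt u (fderiv ℝ u p) p := (hu.differentiable (by simp) p).hasFDerivAt
  have h2 := ((((h1.pow 2).add_const (δ ^ 2)).sqrt h0.ne').sub_const δ).fderiv
  have h3 : fderiv ℝ (regAbs δ u) p e = u p / √(u p ^ 2 + δ ^ 2) * fderiv ℝ u p e := by
    have : regAbs δ u = fun x => √(u x ^ 2 + δ ^ 2) - δ := rfl
    rw [this, h2]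
    have h4 : √(u p ^ 2 + δ ^ 2) ≠ 0 := (Real.sqrt_pos.2 h0).ne'
    simp
    field_simp
  rw [h3, mul_pow, div_pow, Real.sq_sqrt h0.le]
  have : u p ^ 2 / (u p ^ 2 + δ ^ 2) ≤ 1 := (div_le_one h0).2 (by nlinarith [sq_nonneg δ])
  nlinarith [sq_nonneg (fderiv ℝ u p e)]

theorem norm_clR_le {R : ℝ} {f g : ℝ × ℝ → ℝ} (hf : Continuous f) (hg : Continuous g)
    (h : ∀ p, f p ^ 2 ≤ g p ^ 2) : ‖clR R hf‖ ^ 2 ≤ ‖clR R hg‖ ^ 2 := by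
  rw [norm_sq_clR, norm_sq_clR]
  exact integral_mono (GamR_integrableOn (hf.pow 2) R) (GamR_integrableOn (hg.pow 2) R) h

/-- The operator `J†J` of the `L²` form on the form domain. The `H¹` inner product is the sum of the
Dirichlet and `L²` forms, so the top eigenvalue of `J†J` is `1 / (1 + λ₁)`. -/
def B0 (R : ℝ) : VR R →L[ℝ] VR R := (JR R).adjoint ∘L JR R

theorem B0_apply {R : ℝ} (v : VR R) : B0 R v = (JR R).adjoint (JR R v) := rfl

theorem inner_B0 {R : ℝ} (v w : VR R) : ⟪B0 R v, w⟫ = ⟪JR R v, JR R w⟫ := by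
  rw [B0_apply, ContinuousLinearMap.adjoint_inner_left]

theorem B0_symm {R : ℝ} (v w : VR R) : ⟪B0 R v, w⟫ = ⟪v, B0 R w⟫ := by
  rw [inner_B0, real_inner_comm, ← inner_B0, real_inner_comm]

theorem B0_nonneg {R : ℝ} (v : VR R) : 0 ≤ ⟪B0 R v, v⟫ := by
  rw [inner_B0]; exact real_inner_self_nonneg

theorem B0_compact {R : ℝ} (hR : 0 < R) : IsCompactOperator (B0 R) :=
  (JR_compact hR).clm_comp (JR R).adjoint

theorem norm_B0_le {R : ℝ} : ‖B0 R‖ ≤ 1 := by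
  have h1 : ‖JR R‖ ≤ 1 := (JR R).opNorm_le_bound zero_le_one fun v => by
    rw [one_mul]; exact norm_JR_le v
  have h2 : ‖(JR R).adjoint‖ ≤ 1 := by rwa [LinearIsometryEquiv.norm_map]
  exact ((ContinuousLinearMap.opNorm_comp_le _ _).trans
    (mul_le_one₀ h2 (JR R).opNorm_nonneg h1))

theorem integral_bump_pos {R : ℝ} (hR : 0 < R) : 0 < ∫ p in GamR R, bump p ^ 2 := by
  have hm : MeasurableSet (GamR R) := (isOpen_GamR R).measurableSet
  rw [setIntegral_pos_iff_support_of_nonneg_ae]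
  · have : Function.support (fun p => bump p ^ 2) ∩ GamR R = GamR R := by
      refine inter_eq_right.2 fun p hp => ?_
      simpa using (bump_pos hp).ne'
    rw [this]
    refine (isOpen_GamR R).measure_pos _ ⟨(-1/2, -1/2), ?_⟩
    rw [mem_GamR]
    norm_num
    linarith
  · exact Eventually.of_forall fun p => sq_nonneg _
  · exact GamR_integrableOn (bump_contDiff.continuous.pow 2) R

theorem B0_ne_zero {R : ℝ} (hR : 0 < R) : B0 R ≠ 0 := by
  intro h
  have h1 := inner_B0 (inc R ⟨bump, bump_adm hR⟩) (inc R ⟨bump, bump_adm hR⟩)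
  rw [h, JR_inc, real_inner_self_eq_norm_sq, norm_sq_clR] at h1
  have := integral_bump_pos hR
  simp only [zero_apply, inner_zero_left] at h1
  exact absurd h1 this.ne

theorem norm_B0_pos {R : ℝ} (hR : 0 < R) : 0 < ‖B0 R‖ := by
  refine lt_of_le_of_ne (B0 R).opNorm_nonneg fun h => B0_ne_zero hR ?_
  ext1 v
  have := (B0 R).le_opNorm v
  rw [← h, zero_mul] at this
  exact norm_le_zero_iff.1 this

theorem abs_clR {R : ℝ} {f : ℝ × ℝ → ℝ} (hf : Continuous f) :
    |clR R hf| = clR R hf.abs := by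
  refine Lp.ext ?_
  filter_upwards [Lp.coeFn_abs (clR R hf), coeFn_clR R hf, coeFn_clR R hf.abs] with p h1 h2 h3
  rw [h1, h2, h3]

/-- The modulus of a top eigenvector is again a top eigenvector, and a limit of nonnegative
admissible functions. Regularized moduli `a n` of approximations `b n` of `u` do not increase the
`H¹` norm, while their `L²` norms converge to that of `u`, so the defect `β a - J†J a`, with
`β = ‖J†J‖`, tends to zero. This gives strong convergence of `a n`. -/
theorem exists_abs_eigenvector {R : ℝ} (hR : 0 < R) {u : VR R} (hu : B0 R u = ‖B0 R‖ • u) :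
    ∃ w : VR R, B0 R w = ‖B0 R‖ • w ∧ JR R w = |JR R u| ∧
      ∃ a : ℕ → AdmS R, (∀ n p, 0 ≤ (a n : ℝ × ℝ → ℝ) p) ∧
        Tendsto (fun n => inc R (a n)) atTop (𝓝 w) := by
  set β := ‖B0 R‖ with hβ
  have hβ0 : 0 < β := norm_B0_pos hR
  obtain ⟨b, hb⟩ := exists_seq_inc u
  have hδ (n : ℕ) : (0 : ℝ) < 1 / (n + 1) := by positivity
  let a : ℕ → AdmS R := fun n => ⟨regAbs (1 / (n + 1)) (b n), regAbs_adm (hδ n) (b n).2⟩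
  have ha0 : ∀ n p, 0 ≤ (a n : ℝ × ℝ → ℝ) p := fun n p => regAbs_nonneg _ p
  have hle (n : ℕ) : ‖inc R (a n)‖ ^ 2 ≤ ‖inc R (b n)‖ ^ 2 := by
    rw [norm_sq_VR, norm_sq_VR]
    refine add_le_add (add_le_add ?_ ?_) ?_
    · rw [JR_inc, JR_inc]
      refine norm_clR_le _ _ fun p => ?_
      rw [← sq_abs ((b n : ℝ × ℝ → ℝ) p)]
      exact pow_le_pow_left₀ (ha0 n p) (regAbs_le (hδ n) _ p) 2
    · rw [D1R_inc, D1R_inc]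
      exact norm_clR_le _ _ fun p => regAbs_fderiv (hδ n) (b n).2.1 p _
    · rw [D2R_inc, D2R_inc]
      exact norm_clR_le _ _ fun p => regAbs_fderiv (hδ n) (b n).2.1 p _
  have hJb : Tendsto (fun n => |JR R (inc R (b n))|) atTop (𝓝 |JR R u|) := by
    have h1 : Tendsto (fun n => JR R (inc R (b n))) atTop (𝓝 (JR R u)) :=
      ((JR R).continuous.tendsto u).comp hb
    rw [tendsto_iff_norm_sub_tendsto_zero] at h1 ⊢
    exact squeeze_zero (fun _ => norm_nonneg _) (fun n => norm_abs_sub_abs _ _) h1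
  have hJa : Tendsto (fun n => JR R (inc R (a n))) atTop (𝓝 |JR R u|) := by
    have h1 : Tendsto (fun n => JR R (inc R (a n)) - |JR R (inc R (b n))|) atTop (𝓝 0) := by
      have hb : ∀ n : ℕ, ‖JR R (inc R (a n)) - |JR R (inc R (b n))|‖ ≤
          (measureUnivNNReal (muR R) : ℝ) ^ ((2 : ENNReal).toReal⁻¹) * (1 / ((n : ℝ) + 1)) := by
        intro n
        refine Lp.norm_le_of_ae_bound (hδ n).le ?_
        rw [JR_inc, JR_inc, abs_clR]
        filter_upwards [Lp.coeFn_sub (clR R (a n).2.1.continuous) (clR R (b n).2.1.continuous.abs),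
          coeFn_clR R (a n).2.1.continuous, coeFn_clR R (b n).2.1.continuous.abs] with p h1 h2 h3
        rw [h1, Pi.sub_apply, h2, h3, Real.norm_eq_abs, abs_le]
        have e1 := regAbs_le (hδ n) (b n : ℝ × ℝ → ℝ) p
        have e2 := le_regAbs (δ := 1 / ((n : ℝ) + 1)) (b n : ℝ × ℝ → ℝ) p
        have := hδ n
        constructor
        · change _ ≤ regAbs (1 / ((n : ℝ) + 1)) (b n) p - _
          linarith
        · change regAbs (1 / ((n : ℝ) + 1)) (b n) p - _ ≤ _
          linarith
      refine squeeze_zero_norm hb ?_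
      have := tendsto_one_div_add_atTop_nhds_zero_nat (𝕜 := ℝ)
      simpa using this.const_mul ((measureUnivNNReal (muR R) : ℝ) ^ ((2 : ENNReal).toReal⁻¹))
    simpa using h1.add hJb
  set z := |JR R u| with hz
  have hzn : ‖z‖ ^ 2 = β * ‖u‖ ^ 2 := by
    rw [hz, norm_abs_eq_norm, ← real_inner_self_eq_norm_sq, ← inner_B0, hu, real_inner_smul_left,
      real_inner_self_eq_norm_sq]
  have hB : Tendsto (fun n => B0 R (inc R (a n))) atTop (𝓝 ((JR R).adjoint z)) :=
    ((JR R).adjoint.continuous.tendsto z).comp hJa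
  have hdiff : Tendsto (fun n => β • inc R (a n) - B0 R (inc R (a n))) atTop (𝓝 0) := by
    have hbd : ∀ n, ‖β • inc R (a n) - B0 R (inc R (a n))‖ ^ 2 ≤
        2 * β ^ 2 * ‖inc R (b n)‖ ^ 2 - 2 * β * ‖JR R (inc R (a n))‖ ^ 2 := by
      intro n
      rw [norm_sub_sq_real, norm_smul, real_inner_smul_left, mul_pow, real_inner_comm, inner_B0,
        real_inner_self_eq_norm_sq, Real.norm_eq_abs, sq_abs]
      have h1 : ‖B0 R (inc R (a n))‖ ^ 2 ≤ β ^ 2 * ‖inc R (a n)‖ ^ 2 := by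
        rw [← mul_pow]
        exact pow_le_pow_left₀ (norm_nonneg _) ((B0 R).le_opNorm _) 2
      have h2 := mul_le_mul_of_nonneg_left (hle n) (sq_nonneg β)
      nlinarith
    have hlim : Tendsto (fun n => 2 * β ^ 2 * ‖inc R (b n)‖ ^ 2 -
        2 * β * ‖JR R (inc R (a n))‖ ^ 2) atTop (𝓝 0) := by
      have := ((hb.norm.pow 2).const_mul (2 * β ^ 2)).sub ((hJa.norm.pow 2).const_mul (2 * β))
      rw [hzn] at this
      convert this using 2
      ring
    have h2 := squeeze_zero (fun _ => sq_nonneg _) hbd hlim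
    rw [tendsto_zero_iff_norm_tendsto_zero]
    have h3 := h2.sqrt
    simpa [Real.sqrt_sq (norm_nonneg _)] using h3
  have hw : Tendsto (fun n => inc R (a n)) atTop (𝓝 (β⁻¹ • (JR R).adjoint z)) := by
    have := (hdiff.add hB).const_smul β⁻¹
    simpa [smul_smul, inv_mul_cancel₀ hβ0.ne'] using this
  have hJw : JR R (β⁻¹ • (JR R).adjoint z) = z :=
    tendsto_nhds_unique (((JR R).continuous.tendsto _).comp hw) hJa
  refine ⟨β⁻¹ • (JR R).adjoint z, ?_, hJw, a, ha0, hw⟩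
  rw [B0_apply, hJw, smul_smul, mul_inv_cancel₀ hβ0.ne', one_smul]

/-! ### Logarithmic gradient estimate -/

/-- If the variance of `log (1 + |f| / ε)` is bounded uniformly in `ε`, then `f` vanishes almost
everywhere or almost nowhere. On a zero set of positive measure the logarithm is `0`, so the variance
bounds its second moment, which tends to infinity as `ε → 0` unless `f` is `0` almost everywhere. -/
theorem ae_zero_or_ne {α : Type*} [MeasurableSpace α] (ν : Measure α) [IsFiniteMeasure ν]
    {f : α → ℝ} (hf : Measurable f) {C : ℝ}
    (hI : ∀ ε > 0, Integrable (fun x => log (1 + |f x| / ε)) ν)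
    (hI2 : ∀ ε > 0, Integrable (fun x => log (1 + |f x| / ε) ^ 2) ν)
    (h : ∀ ε > 0, ν.real univ * (∫ x, log (1 + |f x| / ε) ^ 2 ∂ν) -
      (∫ x, log (1 + |f x| / ε) ∂ν) ^ 2 ≤ C) :
    (∀ᵐ x ∂ν, f x = 0) ∨ ∀ᵐ x ∂ν, f x ≠ 0 := by
  set Z : Set α := {x | f x = 0} with hZ
  have hZm : MeasurableSet Z := hf (measurableSet_singleton 0)
  by_cases h0 : ν Z = 0
  · right
    rw [ae_iff]
    simpa [hZ] using h0
  left
  have hz : 0 < ν.real Z := ENNReal.toReal_pos h0 (measure_ne_top _ _)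
  have key : ∀ ε > 0, ν.real Z * ∫ x, log (1 + |f x| / ε) ^ 2 ∂ν ≤ C := by
    intro ε hε
    have h1 : ∫ x, log (1 + |f x| / ε) ∂ν = ∫ x in Zᶜ, log (1 + |f x| / ε) ∂ν := by
      rw [← integral_add_compl hZm (hI ε hε), setIntegral_eq_zero_of_forall_eq_zero, zero_add]
      intro x hx
      have : f x = 0 := hx
      simp [this]
    have h2 := sq_integral_le (ν.restrict Zᶜ) (hI ε hε).restrict (hI2 ε hε).restrict
    have h3 : ∫ x in Zᶜ, log (1 + |f x| / ε) ^ 2 ∂ν ≤ ∫ x, log (1 + |f x| / ε) ^ 2 ∂ν :=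
      setIntegral_le_integral (hI2 ε hε) (Eventually.of_forall fun x => sq_nonneg _)
    have h4 : ν.real univ = ν.real Z + ν.real Zᶜ := (measureReal_add_measureReal_compl hZm).symm
    have h5 := h ε hε
    rw [measureReal_restrict_apply_univ] at h2
    rw [h1, h4] at h5
    have h6 := mul_le_mul_of_nonneg_left h3 (measureReal_nonneg (μ := ν) (s := Zᶜ))
    nlinarith
  by_contra hne
  obtain ⟨n, hn⟩ : ∃ n : ℕ, ν {x | 1 / ((n : ℝ) + 1) ≤ |f x|} ≠ 0 := by
    by_contra hcon
    push Not at hcon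
    apply hne
    have := measure_iUnion_null hcon
    rw [ae_iff]
    refine measure_mono_null (fun x hx => ?_) this
    obtain ⟨n, hn⟩ := exists_nat_one_div_lt (abs_pos.2 hx)
    exact mem_iUnion.2 ⟨n, hn.le⟩
  set τ : ℝ := 1 / ((n : ℝ) + 1) with hτ
  have hτ0 : 0 < τ := by positivity
  set θ := ν.real {x | τ ≤ |f x|} with hθ
  have hθ0 : 0 < θ := ENNReal.toReal_pos hn (measure_ne_top _ _)
  -- a value of `ε` for which `log (1 + τ / ε)` is too large
  set K : ℝ := 1 + |C| / (ν.real Z * θ) with hK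
  have hK1 : 1 ≤ K := by
    have : 0 ≤ |C| / (ν.real Z * θ) := by positivity
    linarith
  have hE : 0 < exp K - 1 := by
    have := Real.add_one_lt_exp (show K ≠ 0 by linarith)
    linarith
  have hε : 0 < τ / (exp K - 1) := div_pos hτ0 hE
  have h1 := key _ hε
  have h2 : K ^ 2 * θ ≤ ∫ x, log (1 + |f x| / (τ / (exp K - 1))) ^ 2 ∂ν := by
    refine le_trans ?_ (mul_meas_ge_le_integral_of_nonneg
      (Eventually.of_forall fun x => sq_nonneg _) (hI2 _ hε) (K ^ 2))
    refine mul_le_mul_of_nonneg_left ?_ (sq_nonneg K)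
    refine measureReal_mono fun x hx => ?_
    have hx' : τ ≤ |f x| := hx
    change K ^ 2 ≤ log (1 + |f x| / (τ / (exp K - 1))) ^ 2
    refine pow_le_pow_left₀ (zero_le_one.trans hK1) ?_ 2
    rw [Real.le_log_iff_exp_le (by positivity)]
    have : exp K - 1 = τ / (τ / (exp K - 1)) := by field_simp
    have h3 : τ / (τ / (exp K - 1)) ≤ |f x| / (τ / (exp K - 1)) := by gcongr
    linarith
  have h3 : ν.real Z * (K ^ 2 * θ) ≤ C := (mul_le_mul_of_nonneg_left h2 hz.le).trans h1
  have h4 : K * (ν.real Z * θ) = ν.real Z * θ + |C| := by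
    rw [hK]; field_simp
  have h5 : K * (ν.real Z * θ) ≤ ν.real Z * (K ^ 2 * θ) := by
    have : 0 < ν.real Z * θ := by positivity
    nlinarith [mul_le_mul_of_nonneg_right hK1 this.le]
  have h6 : 0 < ν.real Z * θ := by positivity
  linarith [le_abs_self C]

/-- The test function `v² / (a + ε)`. -/
def quot (ε : ℝ) (v a : ℝ × ℝ → ℝ) (p : ℝ × ℝ) : ℝ := v p ^ 2 / (a p + ε)

theorem quot_adm {R ε : ℝ} (hε : 0 < ε) {v a : ℝ × ℝ → ℝ} (hv : AdmR R v) (ha : AdmR R a)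
    (ha0 : ∀ p, 0 ≤ a p) : AdmR R (quot ε v a) := by
  refine ⟨(hv.1.pow 2).div (ha.1.add contDiff_const) fun p => ?_, fun p hp => ?_⟩
  · have := ha0 p
    positivity
  · simp [quot, hv.2 p hp]

theorem quot_fderiv {ε : ℝ} (hε : 0 < ε) {v a : ℝ × ℝ → ℝ} (hv : ContDiff ℝ 1 v)
    (ha : ContDiff ℝ 1 a) (ha0 : ∀ p, 0 ≤ a p) (p e : ℝ × ℝ) :
    fderiv ℝ (quot ε v a) p e = 2 * v p * fderiv ℝ v p e / (a p + ε)
      - v p ^ 2 * (fderiv ℝ a p e / (a p + ε) ^ 2) := by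
  have h0 : a p + ε ≠ 0 := by have := ha0 p; positivity
  have h1 : HasFDerivAt v (fderiv ℝ v p) p := (hv.differentiable (by simp) p).hasFDerivAt
  have h2 : HasFDerivAt a (fderiv ℝ a p) p := (ha.differentiable (by simp) p).hasFDerivAt
  have l : HasDerivAt (fun t : ℝ => p + t • e) e 0 := by
    simpa using ((hasDerivAt_id (0 : ℝ)).smul_const e).const_add p
  have h1' : HasDerivAt (fun t : ℝ => v (p + t • e)) (fderiv ℝ v p e) 0 := by
    have h1 : HasFDerivAt v (fderiv ℝ v p) (p + (0 : ℝ) • e) := by simpa using h1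
    exact h1.comp_hasDerivAt 0 l
  have h2' : HasDerivAt (fun t : ℝ => a (p + t • e)) (fderiv ℝ a p e) 0 := by
    have h2 : HasFDerivAt a (fderiv ℝ a p) (p + (0 : ℝ) • e) := by simpa using h2
    exact h2.comp_hasDerivAt 0 l
  have hq : ContDiff ℝ 1 (quot ε v a) := (hv.pow 2).div (ha.add contDiff_const) fun q => by
    have := ha0 q; positivity
  have h3 : HasDerivAt (fun t : ℝ => quot ε v a (p + t • e)) (fderiv ℝ (quot ε v a) p e) 0 := by
    have h3 : HasFDerivAt (quot ε v a) (fderiv ℝ (quot ε v a) p) (p + (0 : ℝ) • e) := by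
      simpa using (hq.differentiable (by simp) p).hasFDerivAt
    exact h3.comp_hasDerivAt 0 l
  have h4 := (h1'.pow 2).div (h2'.add_const ε) (by simpa using h0)
  rw [h3.unique h4]
  simp
  field_simp

/-- `log (a + ε) - log ε`. -/
def logR (ε : ℝ) (a : ℝ × ℝ → ℝ) (p : ℝ × ℝ) : ℝ := log (a p + ε) - log ε

theorem logR_contDiff {ε : ℝ} (hε : 0 < ε) {a : ℝ × ℝ → ℝ}
    (ha : ContDiff ℝ 1 a) (ha0 : ∀ p, 0 ≤ a p) : ContDiff ℝ 1 (logR ε a) :=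
  ((ha.add contDiff_const).log fun p => by have := ha0 p; positivity).sub contDiff_const

theorem logR_fderiv {ε : ℝ} (hε : 0 < ε) {a : ℝ × ℝ → ℝ}
    (ha : ContDiff ℝ 1 a) (ha0 : ∀ p, 0 ≤ a p) (p e : ℝ × ℝ) :
    fderiv ℝ (logR ε a) p e = fderiv ℝ a p e / (a p + ε) := by
  have h0 : a p + ε ≠ 0 := by have := ha0 p; positivity
  have h2 : HasFDerivAt a (fderiv ℝ a p) p := (ha.differentiable (by simp) p).hasFDerivAt
  have h3 := (((h2.add_const ε).log h0).sub_const (log ε)).fderiv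
  have : logR ε a = fun x => log (a x + ε) - log ε := rfl
  rw [this, h3]
  simp [div_eq_inv_mul]

theorem logR_eq {ε : ℝ} (hε : 0 < ε) {a : ℝ × ℝ → ℝ} (ha0 : ∀ p, 0 ≤ a p) (p : ℝ × ℝ) :
    logR ε a p = log (1 + |a p| / ε) := by
  have := ha0 p
  rw [logR, ← Real.log_div (by positivity) hε.ne', abs_of_nonneg this]
  congr 1
  field_simp
  ring

theorem bump_bounded (R : ℝ) : ∃ M : ℝ, 0 < M ∧ ∀ p ∈ GamR R, |bump p| ≤ M := by
  have h : IsCompact (Icc (-1) R ×ˢ Icc (-1) R) := isCompact_Icc.prod isCompact_Icc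
  obtain ⟨M, hM⟩ := h.exists_bound_of_continuousOn bump_contDiff.continuous.continuousOn
  refine ⟨max M 1, by positivity, fun p hp => (hM p ?_).trans (le_max_left _ _)⟩
  rw [mem_GamR] at hp
  exact ⟨⟨hp.1.1.le, hp.2.2.1.le⟩, ⟨hp.1.2.le, hp.2.2.2.le⟩⟩

/-- A bound for the test function `bump² / (a + ε)` in the form domain. The constant depends on `ε`,
but not on `a`. -/
theorem exists_quot_bound {R ε : ℝ} (hR : 0 < R) (hε : 0 < ε) :
    ∃ K : ℝ, 0 ≤ K ∧ ∀ (a : AdmS R) (ha0 : ∀ p, 0 ≤ (a : ℝ × ℝ → ℝ) p),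
      ‖inc R ⟨quot ε bump a, quot_adm hε (bump_adm hR) a.2 ha0⟩‖ ^ 2 ≤
        K * (‖inc R ⟨bump, bump_adm hR⟩‖ ^ 2 + ‖inc R a‖ ^ 2) := by
  obtain ⟨M, hM0, hM⟩ := bump_bounded R
  set K : ℝ := 8 * (M / ε) ^ 2 + 2 * (M ^ 2 / ε ^ 2) ^ 2 with hK
  have hK0 : 0 ≤ K := by positivity
  refine ⟨K, hK0, fun a ha0 => ?_⟩
  have hm : MeasurableSet (GamR R) := (isOpen_GamR R).measurableSet
  have hv := bump_contDiff
  have hq := (quot_adm hε (bump_adm hR) a.2 ha0).1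
  have hder (e : ℝ × ℝ) : ‖clR R (continuous_partial hq e)‖ ^ 2 ≤
      K * (‖clR R (continuous_partial hv e)‖ ^ 2 + ‖clR R (continuous_partial a.2.1 e)‖ ^ 2) := by
    have i1 : IntegrableOn (fun p => (fderiv ℝ (quot ε bump a) p e) ^ 2) (GamR R) :=
      GamR_integrableOn ((continuous_partial hq e).pow 2) R
    have i2 : IntegrableOn (fun p => (fderiv ℝ bump p e) ^ 2) (GamR R) :=
      GamR_integrableOn ((continuous_partial hv e).pow 2) R
    have i3 : IntegrableOn (fun p => (fderiv ℝ (a : ℝ × ℝ → ℝ) p e) ^ 2) (GamR R) :=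
      GamR_integrableOn ((continuous_partial a.2.1 e).pow 2) R
    rw [norm_sq_clR, norm_sq_clR, norm_sq_clR, ← integral_add i2 i3, ← integral_const_mul]
    refine setIntegral_mono_on i1 ((i2.add i3).const_mul K) hm fun p hp => ?_
    rw [quot_fderiv hε hv a.2.1 ha0]
    have hpos : 0 < (a : ℝ × ℝ → ℝ) p + ε := by have := ha0 p; positivity
    have hle : ε ≤ (a : ℝ × ℝ → ℝ) p + ε := by have := ha0 p; linarith
    set A := (a : ℝ × ℝ → ℝ) p + ε
    set x := fderiv ℝ bump p e
    set y := fderiv ℝ (a : ℝ × ℝ → ℝ) p e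
    set b := bump p
    have hb : |b| ≤ M := hM p hp
    have e1 : (b / A) ^ 2 ≤ (M / ε) ^ 2 := by
      rw [← sq_abs (b / A), abs_div, abs_of_pos hpos]
      gcongr
    have e2 : (b ^ 2 / A ^ 2) ^ 2 ≤ (M ^ 2 / ε ^ 2) ^ 2 := by
      rw [← div_pow, ← div_pow]
      gcongr
    have e3 : (2 * b * x / A - b ^ 2 * (y / A ^ 2)) ^ 2 ≤
        8 * (b / A) ^ 2 * x ^ 2 + 2 * (b ^ 2 / A ^ 2) ^ 2 * y ^ 2 := by
      have : 2 * b * x / A - b ^ 2 * (y / A ^ 2) = 2 * (b / A) * x - (b ^ 2 / A ^ 2) * y := by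
        ring
      rw [this]
      nlinarith [sq_nonneg (2 * (b / A) * x + (b ^ 2 / A ^ 2) * y)]
    have e4 := mul_le_mul_of_nonneg_right e1 (sq_nonneg x)
    have e5 := mul_le_mul_of_nonneg_right e2 (sq_nonneg y)
    have e6 : 0 ≤ 8 * (M / ε) ^ 2 * y ^ 2 := by positivity
    have e7 : 0 ≤ 2 * (M ^ 2 / ε ^ 2) ^ 2 * x ^ 2 := by positivity
    change _ ≤ K * (x ^ 2 + y ^ 2)
    rw [hK]
    nlinarith
  have h0 : ‖clR R hq.continuous‖ ^ 2 ≤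
      K * (‖clR R hv.continuous‖ ^ 2 + ‖clR R a.2.1.continuous‖ ^ 2) := by
    have i1 : IntegrableOn (fun p => quot ε bump a p ^ 2) (GamR R) :=
      GamR_integrableOn (hq.continuous.pow 2) R
    have i2 : IntegrableOn (fun p => bump p ^ 2) (GamR R) :=
      GamR_integrableOn (hv.continuous.pow 2) R
    have i3 : IntegrableOn (fun p => (a : ℝ × ℝ → ℝ) p ^ 2) (GamR R) :=
      GamR_integrableOn (a.2.1.continuous.pow 2) R
    rw [norm_sq_clR, norm_sq_clR, norm_sq_clR, ← integral_add i2 i3, ← integral_const_mul]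
    refine setIntegral_mono_on i1 ((i2.add i3).const_mul K) hm fun p hp => ?_
    have hpos : 0 < (a : ℝ × ℝ → ℝ) p + ε := by have := ha0 p; positivity
    have hle : ε ≤ (a : ℝ × ℝ → ℝ) p + ε := by have := ha0 p; linarith
    unfold quot
    set A := (a : ℝ × ℝ → ℝ) p + ε
    set b := bump p
    have hb : |b| ≤ M := hM p hp
    have e1 : (b / A) ^ 2 ≤ (M / ε) ^ 2 := by
      rw [← sq_abs (b / A), abs_div, abs_of_pos hpos]
      gcongr
    have e2 : (b ^ 2 / A) ^ 2 = (b / A) ^ 2 * b ^ 2 := by ring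
    have e4 := mul_le_mul_of_nonneg_right e1 (sq_nonneg b)
    have e6 : 0 ≤ (7 * (M / ε) ^ 2 + 2 * (M ^ 2 / ε ^ 2) ^ 2) * b ^ 2 := by positivity
    have e7 : 0 ≤ K * (a : ℝ × ℝ → ℝ) p ^ 2 := by positivity
    change _ ≤ K * (b ^ 2 + (a : ℝ × ℝ → ℝ) p ^ 2)
    rw [e2, mul_add]
    nlinarith
  rw [norm_sq_VR, norm_sq_VR, norm_sq_VR]
  have h1 := hder (1, 0)
  have h2 := hder (0, 1)
  simp only [JR_inc, D1R_inc, D2R_inc]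
  linarith

/-- Testing with `bump² / (a + ε)` controls the gradient of `log (a + ε)`. -/
theorem log_gradient_le {R ε : ℝ} (hR : 0 < R) (hε : 0 < ε) (a : AdmS R)
    (ha0 : ∀ p, 0 ≤ (a : ℝ × ℝ → ℝ) p) (η v : VR R)
    (hη : η = inc R ⟨quot ε bump a, quot_adm hε (bump_adm hR) a.2 ha0⟩)
    (hv : v = inc R ⟨bump, bump_adm hR⟩) :
    ∫ p in GamR R, bump p ^ 2 * gradSq2 (logR ε a) p ≤ 4 * ‖v‖ ^ 2
      - 2 * (⟪D1R R (inc R a), D1R R η⟫ + ⟪D2R R (inc R a), D2R R η⟫) := by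
  subst hη hv
  have hb := bump_contDiff
  have hq := (quot_adm hε (bump_adm hR) a.2 ha0).1
  have hl := logR_contDiff hε a.2.1 ha0
  have hder (e : ℝ × ℝ) : ∫ p in GamR R, bump p ^ 2 * (fderiv ℝ (logR ε a) p e) ^ 2 ≤
      4 * ‖clR R (continuous_partial hb e)‖ ^ 2 -
      2 * ⟪clR R (continuous_partial a.2.1 e), clR R (continuous_partial hq e)⟫ := by
    have c1 : Continuous fun p => (fderiv ℝ bump p e) ^ 2 := (continuous_partial hb e).pow 2
    have c2 : Continuous fun p =>
        fderiv ℝ (a : ℝ × ℝ → ℝ) p e * fderiv ℝ (quot ε bump a) p e :=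
      (continuous_partial a.2.1 e).mul (continuous_partial hq e)
    have c3 := ((hb.continuous.pow 2).mul ((continuous_partial hl e).pow 2))
    rw [norm_sq_clR, inner_clR, ← integral_const_mul, ← integral_const_mul,
      ← integral_sub ((GamR_integrableOn c1 R).const_mul 4) ((GamR_integrableOn c2 R).const_mul 2)]
    refine integral_mono (GamR_integrableOn c3 R)
      (((GamR_integrableOn c1 R).const_mul 4).sub ((GamR_integrableOn c2 R).const_mul 2))
      fun p => ?_
    change bump p ^ 2 * (fderiv ℝ (logR ε a) p e) ^ 2 ≤ 4 * (fderiv ℝ bump p e) ^ 2 -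
      2 * (fderiv ℝ (a : ℝ × ℝ → ℝ) p e * fderiv ℝ (quot ε bump a) p e)
    rw [quot_fderiv hε hb a.2.1 ha0, logR_fderiv hε a.2.1 ha0]
    set A := (a : ℝ × ℝ → ℝ) p + ε
    set x := fderiv ℝ bump p e
    set y := fderiv ℝ (a : ℝ × ℝ → ℝ) p e
    set b := bump p
    have e1 : y * (2 * b * x / A - b ^ 2 * (y / A ^ 2))
        = 2 * b * x * (y / A) - b ^ 2 * (y / A) ^ 2 := by ring
    rw [e1]
    nlinarith [sq_nonneg (2 * x - b * (y / A))]
  have hsum : ∫ p in GamR R, bump p ^ 2 * gradSq2 (logR ε a) p =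
      (∫ p in GamR R, bump p ^ 2 * (fderiv ℝ (logR ε a) p (1, 0)) ^ 2) +
      ∫ p in GamR R, bump p ^ 2 * (fderiv ℝ (logR ε a) p (0, 1)) ^ 2 := by
    have i (e : ℝ × ℝ) : IntegrableOn
        (fun p => bump p ^ 2 * (fderiv ℝ (logR ε a) p e) ^ 2) (GamR R) :=
      GamR_integrableOn ((hb.continuous.pow 2).mul ((continuous_partial hl e).pow 2)) R
    rw [← integral_add (i _) (i _)]
    refine integral_congr_ae (Eventually.of_forall fun p => ?_)
    simp only [gradSq2]
    ring
  have h1 := hder (1, 0)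
  have h2 := hder (0, 1)
  rw [hsum, norm_sq_VR]
  simp only [JR_inc, D1R_inc, D2R_inc]
  have h3 := sq_nonneg ‖clR R hb.continuous‖
  linarith

/-! ### Dichotomy on rectangles -/

theorem log_one_add_lipschitz {ε : ℝ} (hε : 0 < ε) :
    LipschitzWith (Real.toNNReal ε⁻¹) fun t : ℝ => log (1 + |t| / ε) := by
  have key : ∀ x y : ℝ, 1 ≤ y → y ≤ x → log x - log y ≤ x - y := by
    intro x y hy hxy
    have hy0 : 0 < y := by linarith
    have h1 : log x - log y = log (x / y) := (Real.log_div (by linarith) hy0.ne').symm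
    have h2 := Real.log_le_sub_one_of_pos (show 0 < x / y by exact div_pos (by linarith) hy0)
    have h3 : x / y - 1 = (x - y) / y := by field_simp
    have h4 : (x - y) / y ≤ x - y := div_le_self (by linarith) hy
    linarith
  have key2 : ∀ s t : ℝ, log (1 + |s| / ε) - log (1 + |t| / ε) ≤ ε⁻¹ * |s - t| := by
    intro s t
    have hs : 0 ≤ |s| / ε := by positivity
    have ht : 0 ≤ |t| / ε := by positivity
    rcases le_total |t| |s| with h | h
    · have h1 := key (1 + |s| / ε) (1 + |t| / ε) (by linarith) (by gcongr)
      have h2 : (1 + |s| / ε) - (1 + |t| / ε) = ε⁻¹ * (|s| - |t|) := by ring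
      have h3 : ε⁻¹ * (|s| - |t|) ≤ ε⁻¹ * |s - t| := by
        gcongr
        exact abs_sub_abs_le_abs_sub s t
      linarith
    · have h1 : log (1 + |s| / ε) ≤ log (1 + |t| / ε) := by
        apply Real.log_le_log (by linarith)
        gcongr
      have : 0 ≤ ε⁻¹ * |s - t| := by positivity
      linarith
  refine LipschitzWith.of_dist_le_mul fun s t => ?_
  rw [Real.dist_eq, Real.dist_eq, Real.coe_toNNReal _ (by positivity), abs_le]
  refine ⟨?_, key2 s t⟩
  have := key2 t s
  rw [abs_sub_comm] at this
  linarith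

/-- The variance over `Q`, with normalization `m`, is a continuous function on `L²(Γ_R)`. -/
theorem continuous_variance {R : ℝ} (Q : Set (ℝ × ℝ)) (m : ℝ) :
    Continuous fun f : HR R => m * (∫ p in Q, f p ^ 2 ∂(muR R)) - (∫ p in Q, f p ∂(muR R)) ^ 2 := by
  let ρ := LpToLpRestrictCLM (ℝ × ℝ) ℝ ℝ (muR R) 2 Q
  have hρ (f : HR R) : ρ f =ᵐ[(muR R).restrict Q] f := LpToLpRestrictCLM_coeFn ℝ Q f
  have h1 (f : HR R) : ∫ p in Q, f p ^ 2 ∂(muR R) = ⟪ρ f, ρ f⟫ := by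
    rw [L2.inner_def]
    refine integral_congr_ae ?_
    filter_upwards [hρ f] with p hp
    rw [hp]
    simp [pow_two]
  let one : Lp ℝ 2 ((muR R).restrict Q) := (memLp_const (1 : ℝ)).toLp _
  have h2 (f : HR R) : ∫ p in Q, f p ∂(muR R) = ⟪one, ρ f⟫ := by
    rw [L2.inner_def]
    refine integral_congr_ae ?_
    filter_upwards [hρ f, MemLp.coeFn_toLp (memLp_const (μ := (muR R).restrict Q) (p := 2) (1 : ℝ))]
      with p hp hp1
    rw [hp, hp1]
    simp
  simp_rw [h1, h2]
  have := ρ.continuous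
  fun_prop

/-- Testing the eigenvalue equation for `w ≥ 0` with `bump² / (a + ε)`, where `a ≥ 0` is close
to `w`. The error term vanishes as `a → w` for fixed `ε`, and the main term does not depend on
`ε`. -/
theorem log_gradient_le_of_eigenvector {R ε : ℝ} (hR : 0 < R) (hε : 0 < ε) {w : VR R}
    (hw : B0 R w = ‖B0 R‖ • w) (hw0 : 0 ≤ JR R w) (a : AdmS R)
    (ha0 : ∀ p, 0 ≤ (a : ℝ × ℝ → ℝ) p) :
    ∫ p in GamR R, bump p ^ 2 * gradSq2 (logR ε a) p ≤ 4 * ‖inc R ⟨bump, bump_adm hR⟩‖ ^ 2 +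
      4 * (‖inc R a - w‖ * ‖inc R ⟨quot ε bump a, quot_adm hε (bump_adm hR) a.2 ha0⟩‖) := by
  set η := inc R ⟨quot ε bump a, quot_adm hε (bump_adm hR) a.2 ha0⟩ with hη
  refine (log_gradient_le hR hε a ha0 η _ hη rfl).trans ?_
  have hβ0 := norm_B0_pos hR
  have hβ1 := norm_B0_le (R := R)
  have hJ : 0 ≤ ⟪JR R w, JR R η⟫ := by
    rw [inner_HR]
    refine integral_nonneg_of_ae ?_
    have h1 : (0 : ℝ × ℝ → ℝ) ≤ᵐ[muR R] JR R w := (Lp.coeFn_nonneg _).2 hw0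
    have h2 := coeFn_clR R (quot_adm hε (bump_adm hR) a.2 ha0).1.continuous
    filter_upwards [h1, h2] with p hp1 hp2
    rw [hη, JR_inc]
    have h3 : 0 ≤ quot ε bump a p := by
      have := ha0 p
      unfold quot
      positivity
    exact mul_nonneg hp1 (by rw [hp2]; exact h3)
  have h1 : ⟪JR R w, JR R η⟫ = ‖B0 R‖ * ⟪w, η⟫ := by
    rw [← inner_B0, hw, real_inner_smul_left]
  have h2 : 0 ≤ ⟪w, η⟫ := by
    rw [h1] at hJ
    exact nonneg_of_mul_nonneg_right hJ hβ0
  have h3 := inner_VR w η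
  have h4 : 0 ≤ ⟪D1R R w, D1R R η⟫ + ⟪D2R R w, D2R R η⟫ := by nlinarith
  have hD (T : VR R →L[ℝ] HR R) (hT : ∀ v, ‖T v‖ ≤ ‖v‖) :
      ⟪T w, T η⟫ - ‖inc R a - w‖ * ‖η‖ ≤ ⟪T (inc R a), T η⟫ := by
    have e1 : ⟪T w, T η⟫ - ⟪T (inc R a), T η⟫ = ⟪T (w - inc R a), T η⟫ := by
      rw [map_sub, inner_sub_left]
    have e2 := real_inner_le_norm (T (w - inc R a)) (T η)
    have e3 : ‖T (w - inc R a)‖ * ‖T η‖ ≤ ‖inc R a - w‖ * ‖η‖ := by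
      rw [norm_sub_rev]
      exact mul_le_mul (hT _) (hT _) (norm_nonneg _) (norm_nonneg _)
    linarith
  have hn1 (v : VR R) : ‖D1R R v‖ ≤ ‖v‖ := by
    have := norm_sq_VR v
    nlinarith [norm_nonneg v, norm_nonneg (D1R R v), sq_nonneg ‖JR R v‖, sq_nonneg ‖D2R R v‖]
  have hn2 (v : VR R) : ‖D2R R v‖ ≤ ‖v‖ := by
    have := norm_sq_VR v
    nlinarith [norm_nonneg v, norm_nonneg (D2R R v), sq_nonneg ‖JR R v‖, sq_nonneg ‖D1R R v‖]
  have h5 := hD _ hn1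
  have h6 := hD _ hn2
  linarith

/-- A nonnegative top eigenvector vanishes almost everywhere or almost nowhere on a rectangle whose
closure lies in `Γ_R`: there `bump` is bounded below, and the logarithmic gradient estimate with the
Poincaré inequality bounds the variance of `log (1 + w / ε)` uniformly in `ε`. -/
theorem rect_dichotomy {R : ℝ} (hR : 0 < R) {w : VR R}
    (hw : B0 R w = ‖B0 R‖ • w) (hw0 : 0 ≤ JR R w) (a : ℕ → AdmS R)
    (ha0 : ∀ n p, 0 ≤ (a n : ℝ × ℝ → ℝ) p) (ha : Tendsto (fun n => inc R (a n)) atTop (𝓝 w))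
    {x₀ x₁ y₀ y₁ : ℝ} (hx : x₀ < x₁) (hy : y₀ < y₁)
    (hQ : Icc x₀ x₁ ×ˢ Icc y₀ y₁ ⊆ GamR R) :
    (∀ᵐ p ∂(volume.restrict (Rect x₀ x₁ y₀ y₁)), JR R w p = 0) ∨
      ∀ᵐ p ∂(volume.restrict (Rect x₀ x₁ y₀ y₁)), JR R w p ≠ 0 := by
  set Q := Rect x₀ x₁ y₀ y₁ with hQd
  have hQm : MeasurableSet Q := Rect.measurableSet _ _ _ _
  have hQI : Q ⊆ Icc x₀ x₁ ×ˢ Icc y₀ y₁ := prod_mono Ioc_subset_Icc_self Ioc_subset_Icc_self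
  have hQG : Q ⊆ GamR R := hQI.trans hQ
  have hν : (volume : Measure (ℝ × ℝ)).restrict Q = (muR R).restrict Q := by
    rw [Measure.restrict_restrict hQm, inter_eq_left.2 hQG]
  obtain ⟨p₀, hp₀, hmin⟩ := (isCompact_Icc.prod isCompact_Icc).exists_isMinOn
    (s := Icc x₀ x₁ ×ˢ Icc y₀ y₁) ⟨(x₀, y₀), ⟨le_rfl, hx.le⟩, ⟨le_rfl, hy.le⟩⟩
    bump_contDiff.continuous.continuousOn
  set κ := bump p₀ with hκ
  have hκ0 : 0 < κ := bump_pos (hQ hp₀)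
  have hκQ : ∀ p ∈ Q, κ ≤ bump p := fun p hp => hmin (hQI hp)
  set m := (x₁ - x₀) * (y₁ - y₀) with hm
  have hm0 : 0 < m := mul_pos (by linarith) (by linarith)
  have hvol : (volume : Measure (ℝ × ℝ)).real Q = m := Rect.volume_real hx.le hy.le
  set h := max (x₁ - x₀) (y₁ - y₀) with hh
  set N := ‖inc R ⟨bump, bump_adm hR⟩‖ with hN
  have : IsFiniteMeasure ((volume : Measure (ℝ × ℝ)).restrict Q) := by rw [hν]; infer_instance
  have hG (ε : ℝ) (hε : 0 < ε) : ∃ G : HR R,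
      (G =ᵐ[volume.restrict Q] fun p => log (1 + |JR R w p| / ε)) ∧
      m * (∫ p in Q, G p ^ 2) - (∫ p in Q, G p) ^ 2 ≤ m * h ^ 2 * (κ ^ 2)⁻¹ * (4 * N ^ 2) := by
    have hl := log_one_add_lipschitz hε
    have hl0 : (fun t : ℝ => log (1 + |t| / ε)) 0 = 0 := by simp
    refine ⟨hl.compLp hl0 (JR R w), ?_, ?_⟩
    · rw [hν]
      exact ae_restrict_of_ae (hl.coeFn_compLp hl0 (JR R w))
    rw [hν]
    have hlim := ((continuous_variance (R := R) Q m).comp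
      ((hl.continuous_compLp (p := 2) (μ := muR R) hl0).comp (JR R).continuous)).tendsto w
    obtain ⟨K, hK0, hK⟩ := exists_quot_bound hR hε
    have hrhs : Tendsto (fun n => m * h ^ 2 * (κ ^ 2)⁻¹ * (4 * N ^ 2 +
        4 * (‖inc R (a n) - w‖ * √(K * (N ^ 2 + ‖inc R (a n)‖ ^ 2))))) atTop
        (𝓝 (m * h ^ 2 * (κ ^ 2)⁻¹ * (4 * N ^ 2))) := by
      have e1 : Tendsto (fun n => ‖inc R (a n) - w‖) atTop (𝓝 0) :=
        tendsto_iff_norm_sub_tendsto_zero.1 ha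
      have e2 := (((ha.norm.pow 2).const_add (N ^ 2)).const_mul K).sqrt
      have e3 := (((e1.mul e2).const_mul 4).const_add (4 * N ^ 2)).const_mul
        (m * h ^ 2 * (κ ^ 2)⁻¹)
      simpa using e3
    refine le_of_tendsto_of_tendsto' (hlim.comp ha) hrhs fun n => ?_
    have hlc := logR_contDiff hε (a n).2.1 (ha0 n)
    have hae : hl.compLp hl0 (JR R (inc R (a n))) =ᵐ[(muR R).restrict Q] logR ε (a n) := by
      refine ae_restrict_of_ae ?_
      filter_upwards [hl.coeFn_compLp hl0 (JR R (inc R (a n))),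
        coeFn_clR R (a n).2.1.continuous] with p h1 h2
      rw [h1, Function.comp_apply, JR_inc, h2, logR_eq hε (ha0 n)]
    have i1 : ∫ p in Q, hl.compLp hl0 (JR R (inc R (a n))) p ^ 2 ∂(muR R)
        = ∫ p in Q, logR ε (a n) p ^ 2 := by
      rw [hν]
      refine integral_congr_ae ?_
      filter_upwards [hae] with p hp
      rw [hp]
    have i2 : ∫ p in Q, hl.compLp hl0 (JR R (inc R (a n))) p ∂(muR R)
        = ∫ p in Q, logR ε (a n) p := by
      rw [hν]
      exact integral_congr_ae hae
    change m * (∫ p in Q, hl.compLp hl0 (JR R (inc R (a n))) p ^ 2 ∂(muR R)) -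
      (∫ p in Q, hl.compLp hl0 (JR R (inc R (a n))) p ∂(muR R)) ^ 2 ≤ _
    rw [i1, i2]
    refine (Rect.poincare hlc hx.le hy.le (le_max_left _ _) (le_max_right _ _)).trans ?_
    have e1 : κ ^ 2 * ∫ p in Q, gradSq2 (logR ε (a n)) p ≤
        ∫ p in GamR R, bump p ^ 2 * gradSq2 (logR ε (a n)) p := by
      have c1 : Continuous fun p => bump p ^ 2 * gradSq2 (logR ε (a n)) p :=
        (bump_contDiff.continuous.pow 2).mul (continuous_gradSq2 hlc)
      have g0 (p : ℝ × ℝ) : 0 ≤ gradSq2 (logR ε (a n)) p := add_nonneg (sq_nonneg _) (sq_nonneg _)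
      rw [← integral_const_mul]
      refine (setIntegral_mono_on ((Rect.integrableOn (continuous_gradSq2 hlc) _ _ _ _).const_mul _)
        (Rect.integrableOn c1 _ _ _ _) hQm fun p hp => ?_).trans
        (setIntegral_mono_set (GamR_integrableOn c1 R)
          (Eventually.of_forall fun p => mul_nonneg (sq_nonneg _) (g0 p))
          (LE.le.eventuallyLE hQG))
      have := hκQ p hp
      exact mul_le_mul_of_nonneg_right (pow_le_pow_left₀ hκ0.le this 2) (g0 p)
    have e2 := log_gradient_le_of_eigenvector hR hε hw hw0 (a n) (ha0 n)
    have e3 : ‖inc R ⟨quot ε bump (a n), quot_adm hε (bump_adm hR) (a n).2 (ha0 n)⟩‖ ≤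
        √(K * (N ^ 2 + ‖inc R (a n)‖ ^ 2)) := Real.le_sqrt_of_sq_le (hK (a n) (ha0 n))
    have e4 := mul_le_mul_of_nonneg_left e3 (norm_nonneg (inc R (a n) - w))
    have e5 : ∫ p in Q, gradSq2 (logR ε (a n)) p ≤ (κ ^ 2)⁻¹ * (4 * N ^ 2 +
        4 * (‖inc R (a n) - w‖ * √(K * (N ^ 2 + ‖inc R (a n)‖ ^ 2)))) := by
      rw [← div_eq_inv_mul, le_div_iff₀ (by positivity)]
      linarith
    rw [mul_assoc (m * h ^ 2)]
    exact mul_le_mul_of_nonneg_left e5 (by positivity)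
  have hmem (ε : ℝ) (hε : 0 < ε) :
      MemLp (fun p => log (1 + |JR R w p| / ε)) 2 (volume.restrict Q) := by
    obtain ⟨G, hG1, -⟩ := hG ε hε
    refine MemLp.ae_eq hG1 ?_
    rw [hν]
    exact (Lp.memLp G).restrict Q
  refine ae_zero_or_ne (volume.restrict Q) (Lp.stronglyMeasurable (JR R w)).measurable
    (C := m * h ^ 2 * (κ ^ 2)⁻¹ * (4 * N ^ 2))
    (fun ε hε => (hmem ε hε).integrable (by norm_num)) (fun ε hε => (hmem ε hε).integrable_sq)
    fun ε hε => ?_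
  obtain ⟨G, hG1, hG2⟩ := hG ε hε
  rw [measureReal_restrict_apply_univ, hvol, ← integral_congr_ae hG1]
  have : ∫ p in Q, log (1 + |JR R w p| / ε) ^ 2 = ∫ p in Q, G p ^ 2 := by
    refine integral_congr_ae ?_
    filter_upwards [hG1] with p hp
    rw [hp]
  rw [this]
  exact hG2

/-! ### Simplicity of the top eigenvalue -/

theorem isPreconnected_GamR {R : ℝ} (hR : 0 < R) : IsPreconnected (GamR R) := by
  have h : GamR R = (Ioo (-1) 0 ×ˢ Ioo (-1) R) ∪ (Ioo (-1) R ×ˢ Ioo (-1) 0) := by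
    ext p
    rw [mem_GamR]
    simp only [mem_union, mem_prod, mem_Ioo]
    grind
  rw [h]
  refine IsPreconnected.union (-1 / 2, -1 / 2) ?_ ?_
    (isPreconnected_Ioo.prod isPreconnected_Ioo) (isPreconnected_Ioo.prod isPreconnected_Ioo)
  · constructor <;> constructor <;> linarith
  · constructor <;> constructor <;> linarith

/-- Strong maximum principle: a nonnegative top eigenvector is zero almost everywhere or nonzero
almost everywhere. -/
theorem eigenvector_dichotomy {R : ℝ} (hR : 0 < R) {w : VR R}
    (hw : B0 R w = ‖B0 R‖ • w) (hw0 : 0 ≤ JR R w) (a : ℕ → AdmS R)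
    (ha0 : ∀ n p, 0 ≤ (a n : ℝ × ℝ → ℝ) p) (ha : Tendsto (fun n => inc R (a n)) atTop (𝓝 w)) :
    (∀ᵐ p ∂(muR R), JR R w p = 0) ∨ ∀ᵐ p ∂(muR R), JR R w p ≠ 0 := by
  have hm : MeasurableSet (GamR R) := (isOpen_GamR R).measurableSet
  set f : ℝ × ℝ → ℝ := ⇑(JR R w) with hf
  -- the open sets where `f` vanishes, or does not vanish, locally almost everywhere
  let U (P : ℝ → Prop) : Set (ℝ × ℝ) :=
    {p | ∃ N : Set (ℝ × ℝ), IsOpen N ∧ p ∈ N ∧ volume {q | q ∈ N ∧ ¬ P (f q)} = 0}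
  have hU (P : ℝ → Prop) : IsOpen (U P) := by
    rw [isOpen_iff_mem_nhds]
    rintro p ⟨N, hN, hp, h0⟩
    exact Filter.mem_of_superset (hN.mem_nhds hp) fun q hq => ⟨N, hN, hq, h0⟩
  -- a point of the guide is the centre of a rectangle to which `rect_dichotomy` applies
  have hcover : GamR R ⊆ U (fun t => t = 0) ∪ U (fun t => t ≠ 0) := by
    intro p hp
    obtain ⟨u, v, hu, hv, hpu, hpv, huv⟩ := isOpen_prod_iff.1 (isOpen_GamR R) p.1 p.2 hp
    obtain ⟨d₁, hd₁, hb₁⟩ := Metric.isOpen_iff.1 hu p.1 hpu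
    obtain ⟨d₂, hd₂, hb₂⟩ := Metric.isOpen_iff.1 hv p.2 hpv
    have hI (c : ℝ) {d : ℝ} (hd : 0 < d) : Icc (c - d / 2) (c + d / 2) ⊆ Metric.ball c d := by
      intro t ht
      rw [Metric.mem_ball, Real.dist_eq, abs_lt]
      constructor <;> linarith [ht.1, ht.2]
    have hQ : Icc (p.1 - d₁ / 2) (p.1 + d₁ / 2) ×ˢ Icc (p.2 - d₂ / 2) (p.2 + d₂ / 2) ⊆ GamR R :=
      (prod_mono ((hI _ hd₁).trans hb₁) ((hI _ hd₂).trans hb₂)).trans huv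
    have hd := rect_dichotomy hR hw hw0 a ha0 ha (by linarith) (by linarith) hQ
    have hN : IsOpen (Ioo (p.1 - d₁ / 2) (p.1 + d₁ / 2) ×ˢ Ioo (p.2 - d₂ / 2) (p.2 + d₂ / 2)) :=
      isOpen_Ioo.prod isOpen_Ioo
    have hpN : p ∈ Ioo (p.1 - d₁ / 2) (p.1 + d₁ / 2) ×ˢ Ioo (p.2 - d₂ / 2) (p.2 + d₂ / 2) := by
      constructor <;> constructor <;> linarith
    have hsub : Ioo (p.1 - d₁ / 2) (p.1 + d₁ / 2) ×ˢ Ioo (p.2 - d₂ / 2) (p.2 + d₂ / 2) ⊆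
        Rect (p.1 - d₁ / 2) (p.1 + d₁ / 2) (p.2 - d₂ / 2) (p.2 + d₂ / 2) :=
      prod_mono Ioo_subset_Ioc_self Ioo_subset_Ioc_self
    refine hd.imp (fun h => ⟨_, hN, hpN, ?_⟩) (fun h => ⟨_, hN, hpN, ?_⟩)
    · rw [ae_restrict_iff' (Rect.measurableSet _ _ _ _), ae_iff] at h
      refine measure_mono_null (fun q hq => ?_) h
      exact fun hq' => hq.2 (hq' (hsub hq.1))
    · rw [ae_restrict_iff' (Rect.measurableSet _ _ _ _), ae_iff] at h
      refine measure_mono_null (fun q hq => ?_) h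
      exact fun hq' => hq.2 (hq' (hsub hq.1))
  have hdisj (p : ℝ × ℝ) : ¬ (p ∈ U (fun t => t = 0) ∧ p ∈ U (fun t => t ≠ 0)) := by
    rintro ⟨⟨N, hN, hp, h0⟩, ⟨N', hN', hp', h0'⟩⟩
    have h1 : 0 < volume (N ∩ N') := (hN.inter hN').measure_pos _ ⟨p, hp, hp'⟩
    refine h1.ne' (measure_mono_null (fun q hq => ?_) (measure_union_null h0 h0'))
    by_cases hq0 : f q = 0
    · exact Or.inr ⟨hq.2, fun h => h hq0⟩
    · exact Or.inl ⟨hq.1, hq0⟩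
  have hfin (P : ℝ → Prop) (h : GamR R ⊆ U P) : ∀ᵐ p ∂(muR R), P (f p) := by
    rw [ae_restrict_iff' hm, ae_iff]
    refine measure_null_of_locally_null _ fun p hp => ?_
    have hpG : p ∈ GamR R := by
      by_contra hc
      exact hp fun h => absurd h hc
    obtain ⟨N, hN, hpN, h0⟩ := h hpG
    refine ⟨_, inter_mem_nhdsWithin _ (hN.mem_nhds hpN), measure_mono_null (fun q hq => ?_) h0⟩
    exact ⟨hq.2, fun hc => hq.1 fun _ => hc⟩
  have hconn := isPreconnected_GamR hR _ _ (hU (fun t => t = 0)) (hU (fun t => t ≠ 0)) hcover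
  by_cases hne : (GamR R ∩ U (fun t => t ≠ 0)).Nonempty
  · right
    refine hfin (fun t => t ≠ 0) fun p hp => (hcover hp).resolve_left fun hpU => ?_
    obtain ⟨q, -, hq⟩ := hconn ⟨p, hp, hpU⟩ hne
    exact hdisj q hq
  · left
    refine hfin (fun t => t = 0) fun p hp => (hcover hp).resolve_right fun hpU => hne ⟨p, hp, hpU⟩

theorem muR_ne_zero {R : ℝ} (hR : 0 < R) : muR R ≠ 0 := by
  rw [Ne, Measure.restrict_eq_zero]
  refine ((isOpen_GamR R).measure_pos volume ⟨(-1 / 2, -1 / 2), ?_⟩).ne'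
  rw [mem_GamR]
  norm_num
  linarith

/-- A top eigenvector `u` of mean zero vanishes: `|u| - u` is a nonnegative top eigenvector, hence
zero almost everywhere or almost nowhere, so that `u ≥ 0` or `u < 0` almost everywhere. -/
theorem eigenvector_eq_zero {R : ℝ} (hR : 0 < R) {u : VR R} (hu : B0 R u = ‖B0 R‖ • u)
    (hmean : ∫ p, JR R u p ∂(muR R) = 0) : u = 0 := by
  have hβ0 := norm_B0_pos hR
  obtain ⟨w, hw, hJw, -⟩ := exists_abs_eigenvector hR hu
  have hwu : B0 R (w - u) = ‖B0 R‖ • (w - u) := by rw [map_sub, hw, hu, smul_sub]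
  obtain ⟨z, hz, hJz, a, ha0, ha⟩ := exists_abs_eigenvector hR hwu
  have hz0 : 0 ≤ JR R z := by rw [hJz]; exact abs_nonneg _
  have hval : ∀ᵐ p ∂(muR R), JR R z p = |JR R u p| - JR R u p := by
    rw [hJz, map_sub, hJw]
    filter_upwards [Lp.coeFn_abs (|JR R u| - JR R u), Lp.coeFn_sub |JR R u| (JR R u),
      Lp.coeFn_abs (JR R u)] with p h1 h2 h3
    rw [h1, h2, Pi.sub_apply, h3, abs_of_nonneg (sub_nonneg.2 (le_abs_self _))]
  have hi : Integrable (JR R u) (muR R) := (Lp.memLp (JR R u)).integrable (by norm_num)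
  have hJ0 : ∀ᵐ p ∂(muR R), JR R u p = 0 := by
    rcases eigenvector_dichotomy hR hz hz0 a ha0 ha with h | h
    · have hpos : 0 ≤ᵐ[muR R] JR R u := by
        filter_upwards [h, hval] with p h1 h2
        have : |JR R u p| = JR R u p := by linarith
        exact abs_eq_self.1 this
      exact (integral_eq_zero_iff_of_nonneg_ae hpos hi).1 hmean
    · exfalso
      have hneg : ∀ᵐ p ∂(muR R), JR R u p < 0 := by
        filter_upwards [h, hval] with p h1 h2
        by_contra hc
        rw [abs_of_nonneg (not_lt.1 hc), sub_self] at h2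
        exact h1 h2
      have h1 : 0 ≤ᵐ[muR R] fun p => -JR R u p := by
        filter_upwards [hneg] with p hp
        exact neg_nonneg.2 hp.le
      have h2 := (integral_eq_zero_iff_of_nonneg_ae h1 hi.neg).1 (by
        rw [integral_neg, hmean, neg_zero])
      have h3 : ∀ᵐ p ∂(muR R), False := by
        filter_upwards [h2, hneg] with p h2 h3
        have h2' : -JR R u p = 0 := h2
        linarith
      rw [ae_iff] at h3
      simp only [not_false_eq_true, ofPred_true] at h3
      exact muR_ne_zero hR (Measure.measure_univ_eq_zero.1 h3)
  have hJ : JR R u = 0 := by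
    refine Lp.ext ?_
    filter_upwards [hJ0, Lp.coeFn_zero ℝ 2 (muR R)] with p h1 h2
    rw [h1, h2]; rfl
  rw [B0_apply, hJ, map_zero] at hu
  exact (smul_eq_zero.1 hu.symm).resolve_left hβ0.ne'

/-- Simplicity of the top eigenvalue: some combination `w - c • u` has mean zero. -/
theorem B0_simple {R : ℝ} (hR : 0 < R) (u w : VR R) (hu : B0 R u = ‖B0 R‖ • u)
    (hw : B0 R w = ‖B0 R‖ • w) (hu0 : u ≠ 0) : ∃ c : ℝ, w = c • u := by
  have hi (v : VR R) : Integrable (JR R v) (muR R) := (Lp.memLp (JR R v)).integrable (by norm_num)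
  set I : VR R → ℝ := fun v => ∫ p, JR R v p ∂(muR R) with hI
  have hIu : I u ≠ 0 := fun h => hu0 (eigenvector_eq_zero hR hu h)
  refine ⟨I w / I u, ?_⟩
  set c := I w / I u with hc
  refine sub_eq_zero.1 (eigenvector_eq_zero hR ?_ ?_)
  · rw [map_sub, map_smul, hw, hu, smul_sub, smul_comm]
  · have : ∫ p, JR R (w - c • u) p ∂(muR R) = I w - c * I u := by
      simp only [hI]
      rw [← integral_const_mul, ← integral_sub (hi w) ((hi u).const_mul c), map_sub, map_smul]
      refine integral_congr_ae ?_
      filter_upwards [Lp.coeFn_sub (JR R w) (c • JR R u), Lp.coeFn_smul c (JR R u)] with p h1 h2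
      rw [h1, Pi.sub_apply, h2]
      rfl
    rw [this, hc, div_mul_cancel₀ _ hIu, sub_self]

/-! ### Transported operator pencil -/

/-- Multiplication of `L²` functions by bounded continuous functions. -/
def mulOp (R : ℝ) : BoundedContinuousFunction (ℝ × ℝ) ℝ →L[ℝ] HR R →L[ℝ] HR R :=
  ((ContinuousLinearMap.mul ℝ ℝ).holderL (muR R) ⊤ 2 2) ∘L
    (BoundedContinuousFunction.toLp ⊤ (muR R) ℝ)

theorem coeFn_mulOp (R : ℝ) (a : BoundedContinuousFunction (ℝ × ℝ) ℝ) (f : HR R) :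
    mulOp R a f =ᵐ[muR R] fun p => a p * f p := by
  have h1 := (ContinuousLinearMap.mul ℝ ℝ).coeFn_holder (r := 2)
    (BoundedContinuousFunction.toLp ⊤ (muR R) ℝ a) f
  have h2 := BoundedContinuousFunction.coeFn_toLp ℝ (p := ⊤) (μ := muR R) a
  filter_upwards [h1, h2] with p h1 h2
  rw [← h2]
  exact h1

theorem inner_mulOp (R : ℝ) (a : BoundedContinuousFunction (ℝ × ℝ) ℝ) (f g : HR R) :
    ⟪mulOp R a f, g⟫ = ∫ p, a p * (f p * g p) ∂(muR R) := by
  rw [inner_HR]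
  refine integral_congr_ae ?_
  filter_upwards [coeFn_mulOp R a f] with p hp
  rw [hp, mul_assoc]

theorem mulOp_symm (R : ℝ) (a : BoundedContinuousFunction (ℝ × ℝ) ℝ) (f g : HR R) :
    ⟪mulOp R a f, g⟫ = ⟪f, mulOp R a g⟫ := by
  rw [inner_mulOp, real_inner_comm, inner_mulOp]
  simp_rw [mul_comm]

theorem mulOp_one (R : ℝ) : mulOp R 1 = ContinuousLinearMap.id ℝ (HR R) := by
  refine ContinuousLinearMap.ext fun f => Lp.ext ?_
  filter_upwards [coeFn_mulOp R 1 f] with p hp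
  rw [hp]
  simp

theorem inner_mulOp_clR {R : ℝ} (a : BoundedContinuousFunction (ℝ × ℝ) ℝ) {f : ℝ × ℝ → ℝ}
    (hf : Continuous f) :
    ⟪mulOp R a (clR R hf), clR R hf⟫ = ∫ p in GamR R, a p * f p ^ 2 := by
  rw [inner_mulOp]
  refine integral_congr_ae ?_
  filter_upwards [coeFn_clR R hf] with p hp
  rw [hp, sq]

/-- `sandwich D a = D† a D`, the operator of the quadratic form `v ↦ ∫ a (D v)²`. -/
def sandwich {R : ℝ} (D : VR R →L[ℝ] HR R) :
    BoundedContinuousFunction (ℝ × ℝ) ℝ →L[ℝ] VR R →L[ℝ] VR R :=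
  (ContinuousLinearMap.compL ℝ (VR R) (HR R) (VR R) D.adjoint) ∘L
    ((ContinuousLinearMap.compL ℝ (VR R) (HR R) (HR R)).flip D) ∘L mulOp R

theorem inner_sandwich {R : ℝ} (D : VR R →L[ℝ] HR R)
    (a : BoundedContinuousFunction (ℝ × ℝ) ℝ) (v w : VR R) :
    ⟪sandwich D a v, w⟫ = ⟪mulOp R a (D v), D w⟫ := by
  change ⟪D.adjoint (mulOp R a (D v)), w⟫ = _
  rw [ContinuousLinearMap.adjoint_inner_left]

theorem sandwich_symm {R : ℝ} (D : VR R →L[ℝ] HR R)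
    (a : BoundedContinuousFunction (ℝ × ℝ) ℝ) (v w : VR R) :
    ⟪sandwich D a v, w⟫ = ⟪v, sandwich D a w⟫ := by
  rw [inner_sandwich, mulOp_symm, real_inner_comm, ← inner_sandwich, real_inner_comm]

/-- Operator of the Dirichlet form transported from `Γ_{R+s}` to `Γ_R` by
`(x, y) ↦ (x + s χ x, y + s χ y)`, where `X` and `Y` are `χ'` in the two variables. -/
def famA (R : ℝ) (X Y : BoundedContinuousFunction (ℝ × ℝ) ℝ) (s : ℝ) : VR R →L[ℝ] VR R :=
  sandwich (D1R R) (Ring.inverse (1 + s • X) * (1 + s • Y)) +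
    sandwich (D2R R) (Ring.inverse (1 + s • Y) * (1 + s • X))

/-- Operator of the mass form transported from `Γ_{R+s}` to `Γ_R`. -/
def famB (R : ℝ) (X Y : BoundedContinuousFunction (ℝ × ℝ) ℝ) (s : ℝ) : VR R →L[ℝ] VR R :=
  sandwich (JR R) ((1 + s • X) * (1 + s • Y))

theorem analyticAt_lin (X : BoundedContinuousFunction (ℝ × ℝ) ℝ) (s : ℝ) :
    AnalyticAt ℝ (fun s : ℝ => 1 + s • X) s :=
  analyticAt_const.add (analyticAt_id.smul analyticAt_const)

theorem analyticAt_inv_lin (X : BoundedContinuousFunction (ℝ × ℝ) ℝ) :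
    AnalyticAt ℝ (fun s : ℝ => Ring.inverse (1 + s • X)) 0 := by
  have h := analyticAt_inverse (𝕜 := ℝ) (1 : (BoundedContinuousFunction (ℝ × ℝ) ℝ)ˣ)
  refine AnalyticAt.fun_comp (g := Ring.inverse) ?_ (analyticAt_lin X 0)
  simpa using h

theorem famA_analyticAt (R : ℝ) (X Y : BoundedContinuousFunction (ℝ × ℝ) ℝ) :
    AnalyticAt ℝ (famA R X Y) 0 := by
  have h1 := ((sandwich (D1R R)).analyticAt _).fun_comp
    ((analyticAt_inv_lin X).mul (analyticAt_lin Y 0))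
  have h2 := ((sandwich (D2R R)).analyticAt _).fun_comp
    ((analyticAt_inv_lin Y).mul (analyticAt_lin X 0))
  exact h1.add h2

theorem famB_analyticAt (R : ℝ) (X Y : BoundedContinuousFunction (ℝ × ℝ) ℝ) :
    AnalyticAt ℝ (famB R X Y) 0 :=
  ((sandwich (JR R)).analyticAt _).fun_comp ((analyticAt_lin X 0).mul (analyticAt_lin Y 0))

theorem famA_symm (R : ℝ) (X Y : BoundedContinuousFunction (ℝ × ℝ) ℝ) (s : ℝ) (v w : VR R) :
    ⟪famA R X Y s v, w⟫ = ⟪v, famA R X Y s w⟫ := by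
  simp only [famA, add_apply, inner_add_left, inner_add_right, sandwich_symm]

theorem famB_symm (R : ℝ) (X Y : BoundedContinuousFunction (ℝ × ℝ) ℝ) (s : ℝ) (v w : VR R) :
    ⟪famB R X Y s v, w⟫ = ⟪v, famB R X Y s w⟫ := sandwich_symm _ _ _ _

theorem famB_zero (R : ℝ) (X Y : BoundedContinuousFunction (ℝ × ℝ) ℝ) :
    famB R X Y 0 = B0 R := by
  refine ContinuousLinearMap.ext fun v => ext_inner_right ℝ fun w => ?_
  simp [famB, inner_sandwich, mulOp_one, inner_B0]

theorem famA_zero (R : ℝ) (X Y : BoundedContinuousFunction (ℝ × ℝ) ℝ) (v : VR R) :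
    famA R X Y 0 v = v - B0 R v := by
  refine ext_inner_right ℝ fun w => ?_
  simp only [famA, zero_smul, add_zero, Ring.inverse_one, mul_one, add_apply, inner_add_left,
    inner_sandwich, mulOp_one, inner_sub_left, inner_B0, ContinuousLinearMap.id_apply]
  rw [inner_VR v w]
  ring

theorem ring_inverse_lin_apply {X : BoundedContinuousFunction (ℝ × ℝ) ℝ} {s : ℝ}
    (h : IsUnit (1 + s • X)) (p : ℝ × ℝ) :
    Ring.inverse (1 + s • X) p = (1 + s * X p)⁻¹ := by
  have h1 := congrArg (fun f : BoundedContinuousFunction (ℝ × ℝ) ℝ => f p)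
    (Ring.inverse_mul_cancel _ h)
  exact eq_inv_of_mul_eq_one_left h1

theorem isUnit_lin_eventually (X : BoundedContinuousFunction (ℝ × ℝ) ℝ) :
    ∀ᶠ s : ℝ in 𝓝 0, IsUnit (1 + s • X) := by
  have hc : ContinuousAt (fun s : ℝ => 1 + s • X) 0 := (analyticAt_lin X 0).continuousAt
  refine hc.eventually (Units.isOpen.mem_nhds ?_)
  simp

/-! ### Stretching the guide -/

/-- A `C¹` diffeomorphism of the line, applied to both coordinates, carrying `Γ_R` to `Γ_{R'}`. -/
structure Stretch (R R' : ℝ) where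
  /-- The underlying homeomorphism of the line. -/
  e : ℝ ≃ₜ ℝ
  strictMono : StrictMono e
  contDiff : ContDiff ℝ 1 e
  contDiff_symm : ContDiff ℝ 1 e.symm
  map_neg_one : e (-1) = -1
  map_zero : e 0 = 0
  map_R : e R = R'

namespace Stretch

variable {R R' : ℝ}

theorem lt_R (S : Stretch R R') (t : ℝ) : S.e t < R' ↔ t < R := by
  have h := S.strictMono.lt_iff_lt (a := t) (b := R)
  rwa [S.map_R] at h

/-- The inverse of a stretch. -/
def symm (S : Stretch R R') : Stretch R' R where
  e := S.e.symm
  strictMono := fun a b h => by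
    rw [← S.strictMono.lt_iff_lt]
    simpa using h
  contDiff := S.contDiff_symm
  contDiff_symm := S.contDiff
  map_neg_one := by rw [Homeomorph.symm_apply_eq, S.map_neg_one]
  map_zero := by rw [Homeomorph.symm_apply_eq, S.map_zero]
  map_R := by rw [Homeomorph.symm_apply_eq, S.map_R]

/-- The induced map of the plane. -/
def phi (S : Stretch R R') : ℝ × ℝ ≃ₜ ℝ × ℝ := S.e.prodCongr S.e

theorem phi_apply (S : Stretch R R') (p : ℝ × ℝ) : S.phi p = (S.e p.1, S.e p.2) := rfl

theorem preimage_GamR (S : Stretch R R') : S.phi ⁻¹' GamR R' = GamR R := by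
  have h1 (t : ℝ) : -1 < S.e t ↔ -1 < t := by
    conv_lhs => rw [← S.map_neg_one, S.strictMono.lt_iff_lt]
  have h2 (t : ℝ) : S.e t < 0 ↔ t < 0 := by
    conv_lhs => rw [← S.map_zero, S.strictMono.lt_iff_lt]
  ext p
  rw [mem_preimage, mem_GamR, mem_GamR, phi_apply]
  simp only [h1, h2, S.lt_R]

theorem adm (S : Stretch R R') (hR : 0 < R) (hR' : 0 < R') {u : ℝ × ℝ → ℝ} (hu : AdmR R' u) :
    AdmR R (u ∘ S.phi) := by
  refine ⟨hu.1.comp ((S.contDiff.comp contDiff_fst).prodMk (S.contDiff.comp contDiff_snd)),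
    fun p hp => hu.2 _ ?_⟩
  rw [DirB_eq hR, ← S.preimage_GamR, ← Homeomorph.preimage_frontier] at hp
  rw [DirB_eq hR']
  exact ⟨hp.1, (S.lt_R _).2 hp.2.1, (S.lt_R _).2 hp.2.2⟩

theorem hasDerivAt (S : Stretch R R') (t : ℝ) : HasDerivAt S.e (deriv S.e t) t :=
  (S.contDiff.differentiable one_ne_zero t).hasDerivAt

theorem hasFDerivAt (S : Stretch R R') (p : ℝ × ℝ) :
    HasFDerivAt S.phi ((ContinuousLinearMap.toSpanSingleton ℝ (deriv S.e p.1)).prodMap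
      (ContinuousLinearMap.toSpanSingleton ℝ (deriv S.e p.2))) p :=
  HasFDerivAt.prodMap p (S.hasDerivAt p.1).hasFDerivAt (S.hasDerivAt p.2).hasFDerivAt

theorem deriv_nonneg (S : Stretch R R') (t : ℝ) : 0 ≤ deriv S.e t :=
  S.strictMono.monotone.deriv_nonneg

theorem integral_eq (S : Stretch R R') (h : ℝ × ℝ → ℝ) :
    ∫ p in GamR R', h p = ∫ p in GamR R, deriv S.e p.1 * deriv S.e p.2 * h (S.phi p) := by
  have himg : GamR R' = S.phi '' GamR R := by
    rw [← S.preimage_GamR, image_preimage_eq _ S.phi.surjective]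
  rw [himg, integral_image_eq_integral_abs_det_fderiv_smul volume
    (isOpen_GamR R).measurableSet (fun p _ => (S.hasFDerivAt p).hasFDerivWithinAt)
    S.phi.injective.injOn]
  refine setIntegral_congr_fun (isOpen_GamR R).measurableSet fun p _ => ?_
  have hdet : ((ContinuousLinearMap.toSpanSingleton ℝ (deriv S.e p.1)).prodMap
      (ContinuousLinearMap.toSpanSingleton ℝ (deriv S.e p.2))).det =
      deriv S.e p.1 * deriv S.e p.2 := by
    rw [ContinuousLinearMap.det, ContinuousLinearMap.coe_prodMap, LinearMap.det_prodMap]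
    simp
  simp only [hdet, smul_eq_mul]
  rw [abs_of_nonneg (mul_nonneg (S.deriv_nonneg _) (S.deriv_nonneg _))]

theorem fderiv_fst (S : Stretch R R') {u : ℝ × ℝ → ℝ} (hu : ContDiff ℝ 1 u) (p : ℝ × ℝ) :
    fderiv ℝ (u ∘ S.phi) p (1, 0) = deriv S.e p.1 * fderiv ℝ u (S.phi p) (1, 0) := by
  have h := ((hu.differentiable one_ne_zero (S.phi p)).hasFDerivAt.comp p (S.hasFDerivAt p)).fderiv
  rw [h, ← smul_eq_mul, ← map_smul]
  simp

theorem fderiv_snd (S : Stretch R R') {u : ℝ × ℝ → ℝ} (hu : ContDiff ℝ 1 u) (p : ℝ × ℝ) :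
    fderiv ℝ (u ∘ S.phi) p (0, 1) = deriv S.e p.2 * fderiv ℝ u (S.phi p) (0, 1) := by
  have h := ((hu.differentiable one_ne_zero (S.phi p)).hasFDerivAt.comp p (S.hasFDerivAt p)).fderiv
  rw [h, ← smul_eq_mul, ← map_smul]
  simp

end Stretch

/-- A cut-off: `0` up to `0`, `1` from `R` on, with bounded continuous derivative. -/
theorem exists_cutoff {R : ℝ} (hR : 0 < R) : ∃ χ : ℝ → ℝ, ContDiff ℝ 1 χ ∧
    (∀ t ≤ 0, χ t = 0) ∧ (∀ t, R ≤ t → χ t = 1) ∧ ∃ K, ∀ t, |deriv χ t| ≤ K := by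
  refine ⟨fun t => Real.smoothTransition (t / R), ?_, fun t ht => ?_, fun t ht => ?_, ?_⟩
  · exact (Real.smoothTransition.contDiff (n := 1)).comp (contDiff_id.div_const R)
  · exact Real.smoothTransition.zero_of_nonpos (div_nonpos_of_nonpos_of_nonneg ht hR.le)
  · exact Real.smoothTransition.one_of_one_le ((one_le_div hR).2 ht)
  · set χ : ℝ → ℝ := fun t => Real.smoothTransition (t / R) with hχ
    have hc : ContDiff ℝ 1 χ :=
      (Real.smoothTransition.contDiff (n := 1)).comp (contDiff_id.div_const R)
    have hd : Continuous (deriv χ) := hc.continuous_deriv le_rfl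
    obtain ⟨K, hK⟩ := isCompact_Icc.exists_bound_of_continuousOn
      (hd.continuousOn (s := Icc 0 R))
    refine ⟨max K 0, fun t => ?_⟩
    by_cases h0 : t < 0
    · have : χ =ᶠ[𝓝 t] fun _ => 0 := by
        filter_upwards [Iio_mem_nhds h0] with x hx
        exact Real.smoothTransition.zero_of_nonpos
          (div_nonpos_of_nonpos_of_nonneg (le_of_lt hx) hR.le)
      simp [this.deriv_eq]
    by_cases h1 : R < t
    · have : χ =ᶠ[𝓝 t] fun _ => 1 := by
        filter_upwards [Ioi_mem_nhds h1] with x hx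
        exact Real.smoothTransition.one_of_one_le ((one_le_div hR).2 (le_of_lt hx))
      simp [this.deriv_eq]
    · exact (hK t ⟨not_lt.1 h0, not_lt.1 h1⟩).trans (le_max_left _ _)

/-- The map `t ↦ t + s χ t` is a stretch. It is the identity for `t ≤ 0` and the translation by `s` for
`t ≥ R`, hence onto. -/
theorem exists_stretch {R : ℝ} {χ : ℝ → ℝ} (hχ : ContDiff ℝ 1 χ)
    (h0 : ∀ t ≤ 0, χ t = 0) (h1 : ∀ t, R ≤ t → χ t = 1) {s : ℝ}
    (hs : ∀ t, 0 < 1 + s * deriv χ t) :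
    ∃ S : Stretch R (R + s), ∀ t, deriv S.e t = 1 + s * deriv χ t := by
  set f : ℝ → ℝ := fun t => t + s * χ t with hf
  have hd (t : ℝ) : HasDerivAt f (1 + s * deriv χ t) t :=
    (hasDerivAt_id t).add ((hχ.differentiable one_ne_zero t).hasDerivAt.const_mul s)
  have hmono : StrictMono f := strictMono_of_deriv_pos fun t => by rw [(hd t).deriv]; exact hs t
  have hfc : ContDiff ℝ 1 f := contDiff_id.add (contDiff_const.mul hχ)
  have hsurj : Function.Surjective f := by
    refine hfc.continuous.surjective ?_ ?_
    · refine (tendsto_atTop_add_const_right atTop s tendsto_id).congr' ?_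
      filter_upwards [eventually_ge_atTop R] with t ht
      simp [hf, h1 t ht]
    · refine tendsto_id.congr' ?_
      filter_upwards [eventually_le_atBot 0] with t ht
      simp [hf, h0 t ht]
  set e : ℝ ≃ₜ ℝ := (hmono.orderIsoOfSurjective f hsurj).toHomeomorph with he
  have hef : ⇑e = f := rfl
  refine ⟨⟨e, hmono, hfc, ?_, ?_, ?_, ?_⟩, fun t => (hd t).deriv⟩
  · exact e.contDiff_symm_deriv (f' := fun t => 1 + s * deriv χ t) (fun t => (hs t).ne') hd hfc
  · rw [hef]; simp [hf, h0 (-1) (by norm_num)]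
  · rw [hef]; simp [hf, h0 0 le_rfl]
  · rw [hef]; simp [hf, h1 R le_rfl]

/-! ### Analyticity of the first Rayleigh quotient -/

/-- The operator `famB` computes the `L²` mass on the stretched guide. -/
theorem inner_famB {R s : ℝ} {χ : ℝ → ℝ} {X Y : BoundedContinuousFunction (ℝ × ℝ) ℝ}
    (hX : ∀ p, X p = deriv χ p.1) (hY : ∀ p, Y p = deriv χ p.2) (S : Stretch R (R + s))
    (hS : ∀ t, deriv S.e t = 1 + s * deriv χ t) {u : ℝ × ℝ → ℝ} (v : AdmS R)
    (hv : (v : ℝ × ℝ → ℝ) = u ∘ S.phi) :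
    ⟪famB R X Y s (inc R v), inc R v⟫ = ∫ p in GamR (R + s), u p ^ 2 := by
  rw [famB, inner_sandwich, JR_inc, inner_mulOp_clR, S.integral_eq]
  refine setIntegral_congr_fun (isOpen_GamR R).measurableSet fun p _ => ?_
  simp [hX, hY, hS, hv]

/-- The operator `famA` computes the Dirichlet energy on the stretched guide. -/
theorem inner_famA {R s : ℝ} {χ : ℝ → ℝ} {X Y : BoundedContinuousFunction (ℝ × ℝ) ℝ}
    (hX : ∀ p, X p = deriv χ p.1) (hY : ∀ p, Y p = deriv χ p.2) (S : Stretch R (R + s))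
    (hS : ∀ t, deriv S.e t = 1 + s * deriv χ t) (hpos : ∀ t, 0 < 1 + s * deriv χ t)
    (hXu : IsUnit (1 + s • X)) (hYu : IsUnit (1 + s • Y)) {u : ℝ × ℝ → ℝ} (hu : ContDiff ℝ 1 u)
    (v : AdmS R) (hv : (v : ℝ × ℝ → ℝ) = u ∘ S.phi) :
    ⟪famA R X Y s (inc R v), inc R v⟫ = ∫ p in GamR (R + s), gradSq2 u p := by
  have hi (a : BoundedContinuousFunction (ℝ × ℝ) ℝ) (e : ℝ × ℝ) :
      Integrable (fun p => a p * (fderiv ℝ (v : ℝ × ℝ → ℝ) p e) ^ 2) (muR R) :=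
    GamR_integrableOn (a.continuous.mul ((continuous_partial v.2.1 e).pow 2)) R
  rw [famA, add_apply, inner_add_left, inner_sandwich, inner_sandwich, D1R_inc, D2R_inc,
    inner_mulOp_clR, inner_mulOp_clR, S.integral_eq, ← integral_add (hi _ _) (hi _ _)]
  refine setIntegral_congr_fun (isOpen_GamR R).measurableSet fun p _ => ?_
  have h1 := (hpos p.1).ne'
  have h2 := (hpos p.2).ne'
  simp only [BoundedContinuousFunction.mul_apply, ring_inverse_lin_apply hXu,
    ring_inverse_lin_apply hYu, BoundedContinuousFunction.add_apply,
    BoundedContinuousFunction.smul_apply, BoundedContinuousFunction.coe_one, Pi.one_apply, hX, hY, hS, hv,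
    S.fderiv_fst hu, S.fderiv_snd hu, gradSq2, smul_eq_mul]
  field_simp

/-- On a stretched guide the first Rayleigh quotient is the bottom of the transported
pencil. -/
theorem lamR_eq_of_bottom {R s m : ℝ} (hR : 0 < R) (hRs : 0 < R + s) {χ : ℝ → ℝ}
    {X Y : BoundedContinuousFunction (ℝ × ℝ) ℝ}
    (hX : ∀ p, X p = deriv χ p.1) (hY : ∀ p, Y p = deriv χ p.2) (S : Stretch R (R + s))
    (hS : ∀ t, deriv S.e t = 1 + s * deriv χ t) (hpos : ∀ t, 0 < 1 + s * deriv χ t)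
    (hXu : IsUnit (1 + s • X)) (hYu : IsUnit (1 + s • Y))
    (hlow : ∀ v, m * ⟪famB R X Y s v, v⟫ ≤ ⟪famA R X Y s v, v⟫) {u : VR R}
    (hu : ⟪famA R X Y s u, u⟫ = m * ⟪famB R X Y s u, u⟫) (hu0 : 0 < ⟪famB R X Y s u, u⟫) :
    lamR (R + s) = m := by
  set Q : Set ℝ := {r | ∃ u : ℝ × ℝ → ℝ, AdmR (R + s) u ∧ (∫ p in GamR (R + s), (u p) ^ 2) ≠ 0 ∧
    r = (∫ p in GamR (R + s), gradSq2 u p) / ∫ p in GamR (R + s), (u p) ^ 2} with hQ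
  have hlb : ∀ r ∈ Q, m ≤ r := by
    rintro r ⟨w, hw, hw0, rfl⟩
    have hnn : 0 ≤ ∫ p in GamR (R + s), (w p) ^ 2 := integral_nonneg fun p => sq_nonneg _
    rw [le_div_iff₀ (lt_of_le_of_ne hnn hw0.symm)]
    let v : AdmS R := ⟨w ∘ S.phi, S.adm hR hRs hw⟩
    rw [← inner_famB hX hY S hS v rfl, ← inner_famA hX hY S hS hpos hXu hYu hw.1 v rfl]
    exact hlow _
  have hmem (v : AdmS R) (hv : 0 < ⟪famB R X Y s (inc R v), inc R v⟫) :
      ⟪famA R X Y s (inc R v), inc R v⟫ / ⟪famB R X Y s (inc R v), inc R v⟫ ∈ Q := by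
    have hw : AdmR (R + s) ((v : ℝ × ℝ → ℝ) ∘ S.symm.phi) := S.symm.adm hRs hR v.2
    have hv' : (v : ℝ × ℝ → ℝ) = ((v : ℝ × ℝ → ℝ) ∘ S.symm.phi) ∘ S.phi := by
      funext p
      simp [Stretch.phi_apply, Stretch.symm]
    have h1 := inner_famB hX hY S hS v hv'
    have h2 := inner_famA hX hY S hS hpos hXu hYu hw.1 v hv'
    exact ⟨_, hw, by rw [← h1]; exact hv.ne', by rw [h1, h2]⟩
  obtain ⟨a, ha⟩ := exists_seq_inc u
  have hc (T : VR R →L[ℝ] VR R) :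
      Tendsto (fun n => ⟪T (inc R (a n)), inc R (a n)⟫) atTop (𝓝 ⟪T u, u⟫) :=
    ((T.continuous.tendsto u).comp ha).inner ha
  have hlim := (hc (famA R X Y s)).div (hc (famB R X Y s)) hu0.ne'
  rw [hu, mul_div_cancel_right₀ _ hu0.ne'] at hlim
  have hev := (hc (famB R X Y s)).eventually (lt_mem_nhds hu0)
  obtain ⟨n, hn⟩ := hev.exists
  refine le_antisymm (ge_of_tendsto hlim ?_) (le_csInf ⟨_, hmem _ hn⟩ hlb)
  filter_upwards [hev] with n hn
  exact csInf_le ⟨m, hlb⟩ (hmem _ hn)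

theorem lamR_analyticAt {R : ℝ} (hR : 0 < R) : AnalyticAt ℝ lamR R := by
  obtain ⟨χ, hχ, h0, h1, K, hK⟩ := exists_cutoff hR
  have hd : Continuous (deriv χ) := hχ.continuous_deriv le_rfl
  let X : BoundedContinuousFunction (ℝ × ℝ) ℝ :=
    .ofNormedAddCommGroup (fun p => deriv χ p.1) (hd.comp continuous_fst) K fun p => hK _
  let Y : BoundedContinuousFunction (ℝ × ℝ) ℝ :=
    .ofNormedAddCommGroup (fun p => deriv χ p.2) (hd.comp continuous_snd) K fun p => hK _
  obtain ⟨u₀, hu1, hu₀, δ, hδ, hgap⟩ := exists_gap (B0_compact hR) B0_symm B0_nonneg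
    (B0_ne_zero hR) (B0_simple hR)
  have hβ := norm_B0_pos hR
  -- since `famA` is `1 - B0 R` at `s = 0`, the bottom of the pencil there is `‖B0 R‖⁻¹ - 1`
  obtain ⟨m, hm, hev⟩ := exists_analytic_bottom (famA R X Y) (famB R X Y)
    (s₀ := 0) (lam₀ := ‖B0 R‖⁻¹ - 1) (δ := δ) (u₀ := u₀) (famA_analyticAt R X Y)
    (famB_analyticAt R X Y) (famA_symm R X Y) (famB_symm R X Y)
    (by
      rw [famA_zero, famB_zero, hu₀, smul_smul, sub_mul, inv_mul_cancel₀ hβ.ne', sub_smul]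
      simp) hu1
    (by
      rw [famB_zero, hu₀, real_inner_smul_left, real_inner_self_eq_norm_sq, hu1]
      simpa using hβ) hδ
    (fun v => by
      rw [famA_zero, famB_zero, inner_sub_left, real_inner_self_eq_norm_sq]
      linarith [hgap v])
  have hsmall : ∀ᶠ s : ℝ in 𝓝 0, |s| * (|K| + 1) < 1 := by
    have hc : Continuous fun s : ℝ => |s| * (|K| + 1) := by fun_prop
    exact hc.continuousAt.eventually (gt_mem_nhds (by simp))
  have hRs : ∀ᶠ s : ℝ in 𝓝 0, 0 < R + s :=
    (continuous_const.add continuous_id).continuousAt.eventually (lt_mem_nhds (by simpa using hR))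
  have heq : ∀ᶠ s : ℝ in 𝓝 0, lamR (R + s) = m s := by
    filter_upwards [hev, hsmall, hRs, isUnit_lin_eventually X, isUnit_lin_eventually Y] with
      s hs hsK hRs hXu hYu
    obtain ⟨hlow, u, hu, hu0⟩ := hs
    have hpos (t : ℝ) : 0 < 1 + s * deriv χ t := by
      have h2 : |s * deriv χ t| ≤ |s| * (|K| + 1) := by
        rw [abs_mul]
        refine mul_le_mul_of_nonneg_left ?_ (abs_nonneg s)
        linarith [hK t, le_abs_self K]
      linarith [neg_abs_le (s * deriv χ t)]
    obtain ⟨S, hS⟩ := exists_stretch hχ h0 h1 hpos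
    exact lamR_eq_of_bottom hR hRs (fun _ => rfl) (fun _ => rfl) S hS hpos hXu hYu hlow hu hu0
  have hm' : AnalyticAt ℝ (fun r => m (r - R)) R := by
    refine AnalyticAt.fun_comp (g := m) ?_ (analyticAt_id.sub analyticAt_const)
    simpa using hm
  refine hm'.congr ?_
  have ht : Tendsto (fun r : ℝ => r - R) (𝓝 R) (𝓝 0) := by
    have hc : Continuous fun r : ℝ => r - R := by fun_prop
    simpa using hc.tendsto R
  filter_upwards [ht.eventually heq] with r hr
  rw [← hr, add_sub_cancel]

/-- Lemma 2.5: the function `R ↦ λ₁(Γ_R)` is real-analytic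
on `(0,∞)`. -/
theorem lamR_analyticOn : AnalyticOnNhd ℝ lamR (Set.Ioi 0) :=
  fun _ hR => lamR_analyticAt hR
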